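/- Let T be a small theory and let p and q be types of T. Then there exists a countable model of T realizing both p and q; moreover, if T is a decidable AL theory and p and q are decidable types, this model can be chosen decidable. -/

import Mathlib

open FirstOrder FirstOrder.Language

namespace PaperAL

variable {L : FirstOrder.Language.{0, 0}}

/-- Bundled countable-universe models of `T`. -/
abbrev Mdl (T : L.Theory) := Theory.ModelType.{0, 0, 0} T

/-- The complete type of a finite tuple `a` in a structure `M`:
the set of formulas in `n` free variables realized by `a`. -/
def typeOf (M : Type) [L.Structure M] {n : ℕ} (a : Fin n → M) :
    Set (L.Formula (Fin n)) :=
  {φ : L.Formula (Fin n) | φ.Realize a}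

/-- `p` is an (n-)type of the theory `T`: i.e. `p` is realized in some model of `T`. -/
def IsTypeOf (T : L.Theory) {n : ℕ} (p : Set (L.Formula (Fin n))) : Prop :=
  ∃ M : Mdl T, Countable M ∧ ∃ a : Fin n → M, typeOf M a = p

/-- `M` realizes the type `p`. -/
def Realizes (M : Type) [L.Structure M] {n : ℕ} (p : Set (L.Formula (Fin n))) : Prop :=
  ∃ a : Fin n → M, typeOf M a = p

/-- A theory is small if, for each `n`, its set of `n`-types is countable. -/
def IsSmall (T : L.Theory) : Prop :=
  ∀ n : ℕ, {p : Set (L.Formula (Fin n)) | IsTypeOf T p}.Countable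

/-- Two tuples (possibly in different structures) have the same complete type. -/
def SameType {M N : Type} [L.Structure M] [L.Structure N] {n : ℕ}
    (a : Fin n → M) (b : Fin n → N) : Prop :=
  ∀ φ : L.Formula (Fin n), φ.Realize a ↔ φ.Realize b

/-- `M` with the distinguished tuple `a` is a prime model of `Th(M, a)`:
it elementarily embeds, respecting the tuple, into every model of `T` with a
tuple of the same complete type. -/
def IsPrimeOver (T : L.Theory) (M : Type) [L.Structure M] {n : ℕ} (a : Fin n → M) : Prop :=
  M ⊨ T ∧ ∀ N : Mdl T, Countable N → ∀ b : Fin n → N, SameType (L := L) a b →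
    ∃ f : M ↪ₑ[L] N, f ∘ a = b

/-- `M` is a `p`-prime model of `T`. -/
def IsPPrime (T : L.Theory) {n : ℕ} (p : Set (L.Formula (Fin n)))
    (M : Type) [L.Structure M] : Prop :=
  ∃ a : Fin n → M, typeOf M a = p ∧ IsPrimeOver T M a

/-- `M` is an almost prime model of `T`, i.e. `p`-prime for some type `p`. -/
def AlmostPrime (T : L.Theory) (M : Type) [L.Structure M] : Prop :=
  ∃ (n : ℕ) (a : Fin n → M), IsPrimeOver T M a

/-- `M` is a prime model of `T`. -/
def IsPrimeModel (T : L.Theory) (M : Type) [L.Structure M] : Prop :=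
  M ⊨ T ∧ ∀ N : Mdl T, Countable N → Nonempty (M ↪ₑ[L] N)

/-- `S` is an elementary chain of elementary substructures of `M` whose union is `M`. -/
def IsElemChainUnion (M : Type) [L.Structure M]
    (S : ℕ → L.ElementarySubstructure M) : Prop :=
  Monotone S ∧ ∀ x : M, ∃ i, x ∈ S i

/-- `M` is a limit model of `T`: the union of an elementary chain of pairwise isomorphic
almost prime models, but not itself almost prime. -/
def IsLimit (T : L.Theory) (M : Type) [L.Structure M] : Prop :=
  (∃ S : ℕ → L.ElementarySubstructure M, IsElemChainUnion M S ∧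
      (∀ i, AlmostPrime T (S i)) ∧ ∀ i j, Nonempty ((S i) ≃[L] (S j))) ∧
    ¬ AlmostPrime T M

/-- `M` is a `p`-limit model of `T`: the union of an elementary chain of `p`-prime models,
but not itself `p`-prime. -/
def IsPLimit (T : L.Theory) {n : ℕ} (p : Set (L.Formula (Fin n)))
    (M : Type) [L.Structure M] : Prop :=
  (∃ S : ℕ → L.ElementarySubstructure M, IsElemChainUnion M S ∧
      ∀ i, IsPPrime T p (S i)) ∧
    ¬ IsPPrime T p M

/-- `M` is a weakly limit model of `T`: the union of an elementary chain of almost prime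
models. -/
def IsWeaklyLimit (T : L.Theory) (M : Type) [L.Structure M] : Prop :=
  ∃ S : ℕ → L.ElementarySubstructure M, IsElemChainUnion M S ∧ ∀ i, AlmostPrime T (S i)

/-- `M` is a (countably) saturated model of `T`: every type over a finite tuple of `M`
consistent with the theory of that tuple is realized in `M`. -/
def IsSaturatedModel (T : L.Theory) (M : Type) [L.Structure M] : Prop :=
  M ⊨ T ∧ ∀ (n : ℕ) (a : Fin n → M) (N : Mdl T), Countable N →
    ∀ (b : Fin n → N) (c : N), SameType (L := L) a b →
      ∃ d : M, SameType (L := L) (Fin.snoc a d) (Fin.snoc b c)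

/-- `T` is an AL theory: a complete small theory each of whose countable non-saturated
models is either almost prime or limit. -/
def IsALTheory (T : L.Theory) : Prop :=
  T.IsComplete ∧ IsSmall T ∧
    ∀ M : Mdl T, Countable M → ¬ IsSaturatedModel T M →
      AlmostPrime T M ∨ IsLimit T M

/-- A type `p` of `T` is principal if it is generated by a single formula. -/
def IsPrincipalType (T : L.Theory) {n : ℕ} (p : Set (L.Formula (Fin n))) : Prop :=
  ∃ φ ∈ p, ∀ M : Mdl T, Countable M → ∀ a : Fin n → M,
    φ.Realize a → typeOf M a = p

/-- A type `p` of `T` is powerful if every model of `T` realizing `p` realizes every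
type of `T`. -/
def IsPowerfulType (T : L.Theory) {n : ℕ} (p : Set (L.Formula (Fin n))) : Prop :=
  ∀ M : Mdl T, Countable M → Realizes M p →
    ∀ (m : ℕ) (q : Set (L.Formula (Fin m))), IsTypeOf T q → Realizes M q

section Computability

variable [∀ k, Encodable (L.Functions k)] [∀ k, Encodable (L.Relations k)]

/-- A canonical injective Gödel numbering of first-order formulas over an
encodable language. -/
def fmlCode {α : Type} [Encodable α] {n : ℕ} (φ : L.BoundedFormula α n) : ℕ :=
  Encodable.encode φ.listEncode

/-- A structure is decidable if its elementary diagram is computable: under some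
surjective enumeration of its universe, the set of codes of true first-order formulas
with parameters is computable. -/
def DecidableModel (M : Type) [L.Structure M] : Prop :=
  ∃ g : ℕ → M, Function.Surjective g ∧
    ComputablePred (fun c : ℕ => ∃ φ : L.Formula ℕ, fmlCode φ = c ∧ φ.Realize g)

/-- A structure is computable if its atomic diagram is computable. -/
def ComputableModel (M : Type) [L.Structure M] : Prop :=
  ∃ g : ℕ → M, Function.Surjective g ∧
    ComputablePred (fun c : ℕ =>
      ∃ φ : L.Formula ℕ, φ.IsAtomic ∧ fmlCode φ = c ∧ φ.Realize g)

/-- A theory is decidable if it is a computable set of sentences. -/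
def DecidableTheory (T : L.Theory) : Prop :=
  ComputablePred (fun c : ℕ => ∃ φ : L.Sentence, fmlCode φ = c ∧ φ ∈ T)

/-- A type is decidable if it is a computable set of formulas. -/
def DecidableType {n : ℕ} (p : Set (L.Formula (Fin n))) : Prop :=
  ComputablePred (fun c : ℕ => ∃ φ : L.Formula (Fin n), fmlCode φ = c ∧ φ ∈ p)

end Computability


/-- `DecidableModel` with the encodability data of the language given explicitly. -/
def DecidableModel' (L : FirstOrder.Language.{0, 0})
    (i1 : ∀ k, Encodable (L.Functions k)) (i2 : ∀ k, Encodable (L.Relations k))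
    (M : Type) (iM : L.Structure M) : Prop :=
  @DecidableModel L i1 i2 M iM

/-- `ComputableModel` with the encodability data of the language given explicitly. -/
def ComputableModel' (L : FirstOrder.Language.{0, 0})
    (i1 : ∀ k, Encodable (L.Functions k)) (i2 : ∀ k, Encodable (L.Relations k))
    (M : Type) (iM : L.Structure M) : Prop :=
  @ComputableModel L i1 i2 M iM

/-- `T` has exactly one countable model up to isomorphism. -/
def Aleph0Categorical {L : FirstOrder.Language.{0, 0}} (T : L.Theory) : Prop :=
  (∃ M : Mdl T, Countable M) ∧
    ∀ M N : Mdl T, Countable M → Countable N → Nonempty (M ≃[L] N)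

/-- `T` has exactly one model of cardinality `ℵ₁` up to isomorphism. -/
def Aleph1Categorical {L : FirstOrder.Language.{0, 0}} (T : L.Theory) : Prop :=
  (∃ M : Mdl T, Cardinal.mk M = Cardinal.aleph 1) ∧
    ∀ M N : Mdl T, Cardinal.mk M = Cardinal.aleph 1 → Cardinal.mk N = Cardinal.aleph 1 →
      Nonempty (M ≃[L] N)

section Semantics

set_option linter.unusedSectionVars false

variable [∀ k, Encodable (L.Functions k)] [∀ k, Encodable (L.Relations k)]

lemma card_le_aleph0 : L.card ≤ Cardinal.aleph0 := by
  have : Countable L.Symbols := by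
    unfold Language.Symbols
    infer_instance
  exact Cardinal.mk_le_aleph0_iff.2 this

lemma elemSub_realize {M : Type} [L.Structure M] (S : L.ElementarySubstructure M) {α : Type}
    (φ : L.Formula α) (w : α → S) : φ.Realize w ↔ φ.Realize (fun i => (w i : M)) := by
  have := S.subtype.map_formula φ w
  exact this.symm

/-- Downward Löwenheim–Skolem for assignments of countably many variables. -/
lemma exists_countable {T : L.Theory} {α : Type} [Countable α] (M : Mdl T) (v : α → M) :
    ∃ N : Mdl T, Countable N ∧ ∃ w : α → N, ∀ φ : L.Formula α, φ.Realize w ↔ φ.Realize v := by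
  by_cases hM : Countable M
  · exact ⟨M, hM, v, fun _ => Iff.rfl⟩
  · have hc : Cardinal.aleph0 ≤ Cardinal.mk M := by
      by_contra h
      push Not at h
      exact hM (Cardinal.mk_le_aleph0_iff.1 h.le)
    obtain ⟨S, hS, hcard⟩ := Language.exists_elementarySubstructure_card_eq L (M := M)
      (Set.range v) Cardinal.aleph0.{0} le_rfl
      (by simpa using Cardinal.mk_le_aleph0_iff.2 (Set.countable_range v).to_subtype) (by simpa using card_le_aleph0)
      (by simpa using hc)
    have hSc : Countable S := by
      refine Cardinal.mk_le_aleph0_iff.1 ?_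
      simpa using hcard.le
    refine ⟨⟨S⟩, hSc, fun i => ⟨v i, hS ⟨i, rfl⟩⟩, fun φ => ?_⟩
    exact elemSub_realize S φ _

/-- Compactness for sets of formulas. -/
lemma compact {α : Type} [Countable α] (T : L.Theory) (Γ : Set (L.Formula α))
    (h : ∀ F : Finset (L.Formula α), (F : Set (L.Formula α)) ⊆ Γ →
      ∃ M : Mdl T, ∃ v : α → M, ∀ φ ∈ F, φ.Realize v) :
    ∃ M : Mdl T, Countable M ∧ ∃ v : α → M, ∀ φ ∈ Γ, φ.Realize v := by
  classical
  let T' : L[[α]].Theory := (L.lhomWithConstants α).onTheory T ∪ Formula.equivSentence '' Γ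
  have hsat : T'.IsSatisfiable := by
    rw [Theory.isSatisfiable_iff_isFinitelySatisfiable]
    intro T0 hT0
    obtain ⟨M, v, hv⟩ := h ((T0.image Formula.equivSentence.symm).filter (· ∈ Γ)) (by
      intro x hx; simp at hx; exact hx.2)
    let _ := constantsOn.structure v
    have : M ⊨ (T0 : L[[α]].Theory) := by
      refine ⟨fun φ hφ => ?_⟩
      rcases hT0 hφ with h1 | ⟨ψ, hψ, rfl⟩
      · have : M ⊨ (L.lhomWithConstants α).onTheory T := (LHom.onTheory_model _ _).2 inferInstance
        exact this.realize_of_mem _ h1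
      · have := hv ψ (by
          simp only [Finset.mem_filter, Finset.mem_image]
          exact ⟨⟨_, hφ, by simp⟩, hψ⟩)
        have h2 := (Formula.realize_equivSentence_symm M (Formula.equivSentence ψ) v).1
          (by simpa using this)
        exact h2
    exact Theory.Model.isSatisfiable M
  obtain ⟨M⟩ := hsat
  let iL : L.Structure M := (L.lhomWithConstants α).reduct M
  have iE : (L.lhomWithConstants α).IsExpansionOn M := LHom.isExpansionOn_reduct _ _
  have hM : M ⊨ T := (LHom.onTheory_model (L.lhomWithConstants α) T).1
    (M.is_model.mono Set.subset_union_left)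
  obtain ⟨N, hN, w, hw⟩ := exists_countable (T := T) ⟨M⟩
    (fun a : α => ((L.con a : L[[α]].Constants) : M))
  refine ⟨N, hN, w, fun φ hφ => (hw φ).2 ?_⟩
  have h1 : M ⊨ Formula.equivSentence φ :=
    M.is_model.realize_of_mem _ (Or.inr ⟨φ, hφ, rfl⟩)
  exact (Formula.realize_equivSentence M φ).1 h1

end Semantics

section JointTypes

set_option linter.unusedSectionVars false

variable [∀ k, Encodable (L.Functions k)] [∀ k, Encodable (L.Relations k)]

/-- The tuple `a` is the concatenation of a realization of `p` and a realization of `q`. -/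
def Joint {n m : ℕ} (p : Set (L.Formula (Fin n))) (q : Set (L.Formula (Fin m)))
    (M : Type) [L.Structure M] (a : Fin (n + m) → M) : Prop :=
  typeOf M (a ∘ Fin.castAdd m) = p ∧ typeOf M (a ∘ Fin.natAdd n) = q

lemma typeOf_eq_of_forall {T : L.Theory} {n : ℕ} {p : Set (L.Formula (Fin n))}
    (hp : IsTypeOf T p) {M : Type} [L.Structure M] {a : Fin n → M}
    (h : ∀ φ ∈ p, φ.Realize a) : typeOf M a = p := by
  obtain ⟨N, -, b, rfl⟩ := hp
  ext φ
  refine ⟨fun h1 => ?_, h φ⟩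
  by_contra h2
  have h3 : φ.not ∈ typeOf N b := by
    change (φ.not).Realize b
    rw [Formula.realize_not]; exact h2
  have := h _ h3
  rw [Formula.realize_not] at this
  exact this h1

lemma foldr_mem {T : L.Theory} {n : ℕ} {p : Set (L.Formula (Fin n))}
    (hp : IsTypeOf T p) (s : List (L.Formula (Fin n))) (hs : ∀ φ ∈ s, φ ∈ p) :
    (s.foldr (· ⊓ ·) ⊤ : L.Formula (Fin n)) ∈ p := by
  obtain ⟨N, -, b, rfl⟩ := hp
  exact (BoundedFormula.realize_foldr_inf s b default).2 hs

lemma foldr_realize {n : ℕ} (s : List (L.Formula (Fin n))) {M : Type} [L.Structure M]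
    {a : Fin n → M} (h : (s.foldr (· ⊓ ·) ⊤ : L.Formula (Fin n)).Realize a) :
    ∀ φ ∈ s, φ.Realize a :=
  (BoundedFormula.realize_foldr_inf s a default).1 h

lemma joint_compact {T : L.Theory} {n m : ℕ} {p : Set (L.Formula (Fin n))}
    {q : Set (L.Formula (Fin m))} (hp : IsTypeOf T p) (hq : IsTypeOf T q)
    (Δ : Set (L.Formula (Fin (n + m))))
    (h : ∀ p1 ∈ p, ∀ q1 ∈ q, ∀ F : Finset (L.Formula (Fin (n + m))),
      (F : Set (L.Formula (Fin (n + m)))) ⊆ Δ → ∃ M : Mdl T, ∃ a : Fin (n + m) → M,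
        p1.Realize (a ∘ Fin.castAdd m) ∧ q1.Realize (a ∘ Fin.natAdd n) ∧ ∀ φ ∈ F, φ.Realize a) :
    ∃ M : Mdl T, Countable M ∧ ∃ a : Fin (n + m) → M, Joint p q M a ∧ ∀ φ ∈ Δ, φ.Realize a := by
  classical
  obtain ⟨M, hM, a, ha⟩ := compact T
    (((fun φ : L.Formula (Fin n) => φ.relabel (Fin.castAdd m)) '' p ∪
      (fun φ : L.Formula (Fin m) => φ.relabel (Fin.natAdd n)) '' q) ∪ Δ) (by
    intro F hF
    obtain ⟨sp, hsp, hsp'⟩ := (Finset.subset_set_image_iff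
      (t := F.filter (· ∈ (fun φ : L.Formula (Fin n) => φ.relabel (Fin.castAdd m)) '' p))
      (f := (fun φ : L.Formula (Fin n) => φ.relabel (Fin.castAdd m))) (s := p)).1
      (by intro x hx; exact (Finset.mem_filter.1 hx).2)
    obtain ⟨sq, hsq, hsq'⟩ := (Finset.subset_set_image_iff
      (t := F.filter (· ∈ (fun φ : L.Formula (Fin m) => φ.relabel (Fin.natAdd n)) '' q))
      (f := (fun φ : L.Formula (Fin m) => φ.relabel (Fin.natAdd n))) (s := q)).1
      (by intro x hx; exact (Finset.mem_filter.1 hx).2)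
    obtain ⟨M, a, h1, h2, h3⟩ := h _ (foldr_mem hp sp.toList (fun φ hφ => hsp (by simpa using hφ)))
      _ (foldr_mem hq sq.toList (fun φ hφ => hsq (by simpa using hφ)))
      (F.filter (· ∈ Δ)) (by intro x hx; exact (Finset.mem_filter.1 hx).2)
    refine ⟨M, a, fun φ hφ => ?_⟩
    rcases hF hφ with (h4 | h4) | h4
    · have : φ ∈ sp.image (fun φ : L.Formula (Fin n) => φ.relabel (Fin.castAdd m)) := by
        rw [hsp']; exact Finset.mem_filter.2 ⟨hφ, h4⟩
      obtain ⟨ψ, hψ, rfl⟩ := Finset.mem_image.1 this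
      exact Formula.realize_relabel.2 (foldr_realize _ h1 ψ (by simpa using hψ))
    · have : φ ∈ sq.image (fun φ : L.Formula (Fin m) => φ.relabel (Fin.natAdd n)) := by
        rw [hsq']; exact Finset.mem_filter.2 ⟨hφ, h4⟩
      obtain ⟨ψ, hψ, rfl⟩ := Finset.mem_image.1 this
      exact Formula.realize_relabel.2 (foldr_realize _ h2 ψ (by simpa using hψ))
    · exact h3 φ (Finset.mem_filter.2 ⟨hφ, h4⟩))
  refine ⟨M, hM, a, ⟨typeOf_eq_of_forall hp fun φ hφ => ?_,
    typeOf_eq_of_forall hq fun φ hφ => ?_⟩, fun φ hφ => ha φ (Or.inr hφ)⟩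
  · exact Formula.realize_relabel.1 (ha _ (Or.inl (Or.inl ⟨φ, hφ, rfl⟩)))
  · exact Formula.realize_relabel.1 (ha _ (Or.inl (Or.inr ⟨φ, hφ, rfl⟩)))

lemma exists_joint {T : L.Theory} (hT : T.IsComplete) {n m : ℕ} {p : Set (L.Formula (Fin n))}
    {q : Set (L.Formula (Fin m))} (hp : IsTypeOf T p) (hq : IsTypeOf T q) :
    ∃ M : Mdl T, Countable M ∧ ∃ a : Fin (n + m) → M, Joint p q M a := by
  obtain ⟨M, hM, a, ha, -⟩ := joint_compact hp hq ∅ (by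
    obtain ⟨M, -, a, rfl⟩ := hp
    obtain ⟨N, -, b, rfl⟩ := hq
    intro p1 hp1 q1 hq1 F hF
    have h1 : N ⊨ ((q1.relabel Sum.inr : L.Formula (Empty ⊕ Fin m)).iExs (Fin m)) :=
      Formula.realize_iExs.2 ⟨b, by rw [Formula.realize_relabel]; exact hq1⟩
    have h2 : M ⊨ ((q1.relabel Sum.inr : L.Formula (Empty ⊕ Fin m)).iExs (Fin m)) :=
      (hT.realize_sentence_iff _ M).2 ((hT.realize_sentence_iff _ N).1 h1)
    obtain ⟨b', hb'⟩ := Formula.realize_iExs.1 h2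
    rw [Formula.realize_relabel] at hb'
    refine ⟨M, Fin.append a b', ?_, ?_, ?_⟩
    · have : Fin.append a b' ∘ Fin.castAdd m = a := by ext i; simp
      rw [this]; exact hp1
    · have : Fin.append a b' ∘ Fin.natAdd n = b' := by ext i; simp
      rw [this]; exact hb'
    · intro φ hφ; exact absurd (hF hφ) (by simp))
  exact ⟨M, hM, a, ha⟩

/-- Smallness gives a completion of `p(x) ∪ q(y)` isolated by one formula. -/
lemma exists_isolated {T : L.Theory} (hT : T.IsComplete) (hs : IsSmall T) {n m : ℕ}
    {p : Set (L.Formula (Fin n))}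
    {q : Set (L.Formula (Fin m))} (hp : IsTypeOf T p) (hq : IsTypeOf T q) :
    ∃ χ : L.Formula (Fin (n + m)),
      (∃ M : Mdl T, Countable M ∧ ∃ a : Fin (n + m) → M, Joint p q M a ∧ χ.Realize a) ∧
      ∀ M N : Mdl T, Countable M → Countable N → ∀ (a : Fin (n + m) → M) (b : Fin (n + m) → N),
        Joint p q M a → Joint p q N b → χ.Realize a → χ.Realize b → typeOf (L := L) M a = typeOf N b := by
  classical
  let C : Set (Set (L.Formula (Fin (n + m)))) :=
    {r | ∃ M : Mdl T, Countable M ∧ ∃ a : Fin (n + m) → M, Joint p q M a ∧ typeOf M a = r}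
  have hCc : C.Countable := (hs (n + m)).mono (by
    rintro r ⟨M, hM, a, -, h⟩
    exact ⟨M, hM, a, h⟩)
  have hCn : C.Nonempty := by
    obtain ⟨M, hM, a, ha⟩ := exists_joint hT hp hq
    exact ⟨_, M, hM, a, ha, rfl⟩
  obtain ⟨e, he⟩ := hCc.exists_eq_range hCn
  by_contra hcon
  push Not at hcon
  have hnot : ∀ r ∈ C, ∀ φ, φ.not ∈ r ↔ φ ∉ r := by
    rintro _ ⟨M, hM, a, -, rfl⟩ φ
    exact Formula.realize_not
  have hinf : ∀ r ∈ C, ∀ φ ψ : L.Formula (Fin (n + m)), φ ⊓ ψ ∈ r ↔ φ ∈ r ∧ ψ ∈ r := by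
    rintro _ ⟨M, hM, a, -, rfl⟩ φ ψ
    exact Formula.realize_inf
  have key : ∀ (χ : {χ : L.Formula (Fin (n + m)) // ∃ r ∈ C, χ ∈ r}) (i : ℕ),
      ∃ χ' : {χ : L.Formula (Fin (n + m)) // ∃ r ∈ C, χ ∈ r},
        χ'.1 ∉ e i ∧ ∀ r ∈ C, χ'.1 ∈ r → χ.1 ∈ r := by
    rintro ⟨χ, hχ⟩ i
    have hi : e i ∈ C := by rw [he]; exact ⟨i, rfl⟩
    obtain ⟨_, ⟨M0, hM0, a0, ha0, rfl⟩, hχ0⟩ := hχ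
    obtain ⟨M, N, hM, hN, a, b, ha, hb, h1, h2, h3⟩ := hcon χ ⟨M0, hM0, a0, ha0, hχ0⟩
    have : ∃ r ∈ C, χ ∈ r ∧ r ≠ e i := by
      by_cases h4 : typeOf M a = e i
      · exact ⟨_, ⟨N, hN, b, hb, rfl⟩, h2, fun h5 => h3 (h4.trans h5.symm)⟩
      · exact ⟨_, ⟨M, hM, a, ha, rfl⟩, h1, h4⟩
    obtain ⟨r, hr, hχr, hne⟩ := this
    have : ∃ ψ ∈ r, ψ ∉ e i := by
      by_contra h5
      push Not at h5
      refine hne (Set.Subset.antisymm h5 fun φ hφ => ?_)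
      by_contra h6
      exact (hnot _ hi φ).1 (h5 _ ((hnot r hr φ).2 h6)) hφ
    obtain ⟨ψ, hψ, hψi⟩ := this
    exact ⟨⟨χ ⊓ ψ, r, hr, (hinf r hr _ _).2 ⟨hχr, hψ⟩⟩,
      fun h => hψi ((hinf _ hi _ _).1 h).2, fun s hs h => ((hinf s hs _ _).1 h).1⟩
  choose f hf1 hf2 using key
  have hstart : ∃ r ∈ C, (⊤ : L.Formula (Fin (n + m))) ∈ r := by
    obtain ⟨_, M, hM, a, ha, rfl⟩ := hCn
    exact ⟨_, ⟨M, hM, a, ha, rfl⟩, by change Formula.Realize _ a; simp⟩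
  let g : ℕ → {χ : L.Formula (Fin (n + m)) // ∃ r ∈ C, χ ∈ r} :=
    fun k => Nat.rec ⟨⊤, hstart⟩ (fun i χ => f χ i) k
  have hg : ∀ k, g (k + 1) = f (g k) k := fun k => rfl
  have hmono : ∀ r ∈ C, ∀ i k, i ≤ k → (g k).1 ∈ r → (g i).1 ∈ r := by
    intro r hr i k hik
    induction k, hik using Nat.le_induction with
    | base => exact id
    | succ k _ ih => intro h; exact ih (hf2 (g k) k r hr (by rw [← hg]; exact h))
  obtain ⟨M, hM, a, ha, hall⟩ := joint_compact hp hq (Set.range fun k => (g k).1) (by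
    intro p1 hp1 q1 hq1 F hF
    have hk : ∃ k, ∀ φ ∈ F, ∃ i ≤ k, (g i).1 = φ := by
      have hF' : ∀ φ : F, ∃ i, (g i).1 = φ.1 := fun φ => hF φ.2
      choose w hw using hF'
      exact ⟨Finset.univ.sup w, fun φ hφ => ⟨w ⟨φ, hφ⟩, Finset.le_sup (Finset.mem_univ _),
        hw ⟨φ, hφ⟩⟩⟩
    obtain ⟨k, hk⟩ := hk
    obtain ⟨_, ⟨M, hM, a, ha, rfl⟩, hr⟩ := (g k).2
    refine ⟨M, a, ?_, ?_, fun φ hφ => ?_⟩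
    · rw [← ha.1] at hp1; exact hp1
    · rw [← ha.2] at hq1; exact hq1
    · obtain ⟨i, hi, rfl⟩ := hk φ hφ
      exact hmono _ ⟨M, hM, a, ha, rfl⟩ i k hi hr)
  have hmem : typeOf M a ∈ C := ⟨M, hM, a, ha, rfl⟩
  rw [he] at hmem
  obtain ⟨i, hi⟩ := hmem
  apply hf1 (g i) i
  rw [hi, ← hg]
  exact hall _ ⟨i + 1, rfl⟩

end JointTypes

section RawCodes

set_option linter.unusedSectionVars false

/-- Symbols of raw terms. -/
abbrev TTok := (ℕ ⊕ ℕ) ⊕ (ℕ × ℕ)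
/-- Symbols of raw formulas. -/
abbrev Tok := (ℕ × List TTok) ⊕ ((ℕ × ℕ) ⊕ ℕ)
/-- Raw formulas: lists of symbols. -/
abbrev Raw := List Tok

/-- A plain number symbol. -/
abbrev nt (j : ℕ) : Tok := Sum.inr (Sum.inr j)

variable [∀ k, Encodable (L.Functions k)] [∀ k, Encodable (L.Relations k)]
variable {α β : Type} [Encodable α] [Encodable β]

/-- The raw symbol of a term symbol. -/
def ttokOf {k : ℕ} : (α ⊕ Fin k) ⊕ (Σ i, L.Functions i) → TTok
  | Sum.inl (Sum.inl a) => Sum.inl (Sum.inl (Encodable.encode a))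
  | Sum.inl (Sum.inr i) => Sum.inl (Sum.inr i.val)
  | Sum.inr f => Sum.inr (f.1, Encodable.encode f.2)

/-- The raw form of a term. -/
def rterm {k : ℕ} (t : L.Term (α ⊕ Fin k)) : List TTok := t.listEncode.map ttokOf

/-- The raw symbol of a formula symbol. -/
def tokOf : (Σ k, L.Term (α ⊕ Fin k)) ⊕ ((Σ n, L.Relations n) ⊕ ℕ) → Tok
  | Sum.inl t => Sum.inl (t.1, rterm t.2)
  | Sum.inr (Sum.inl R) => Sum.inr (Sum.inl (R.1, Encodable.encode R.2))
  | Sum.inr (Sum.inr j) => nt j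

/-- The raw form of a formula. -/
def raw {k : ℕ} (φ : L.BoundedFormula α k) : Raw := φ.listEncode.map tokOf

lemma encode_map_eq {A B : Type} [Encodable A] [Encodable B] (f : A → B)
    (h : ∀ a, Encodable.encode (f a) = Encodable.encode a) (l : List A) :
    Encodable.encode (l.map f) = Encodable.encode l := by
  induction l with
  | nil => rfl
  | cons a l ih => simp [h, ih]

lemma encode_ttokOf {k : ℕ} (x : (α ⊕ Fin k) ⊕ (Σ i, L.Functions i)) :
    Encodable.encode (ttokOf x) = Encodable.encode x := by
  rcases x with (a | i) | ⟨i, f⟩ <;> simp [ttokOf]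
  rfl

lemma encode_rterm {k : ℕ} (t : L.Term (α ⊕ Fin k)) :
    Encodable.encode (rterm t) = Encodable.encode t := by
  rw [rterm, encode_map_eq _ encode_ttokOf]
  rfl

lemma encode_tokOf (x : (Σ k, L.Term (α ⊕ Fin k)) ⊕ ((Σ n, L.Relations n) ⊕ ℕ)) :
    Encodable.encode (tokOf x) = Encodable.encode x := by
  rcases x with ⟨k, t⟩ | (⟨n, R⟩ | j)
  · simp [tokOf, encode_rterm]
  · simp [tokOf]
  · simp [tokOf]

lemma encode_raw {k : ℕ} (φ : L.BoundedFormula α k) : Encodable.encode (raw φ) = fmlCode φ := by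
  rw [raw, encode_map_eq _ encode_tokOf]
  rfl

@[simp] lemma rterm_inl {k : ℕ} (a : α) :
    rterm (Term.var (Sum.inl a) : L.Term (α ⊕ Fin k)) = [Sum.inl (Sum.inl (Encodable.encode a))] :=
  rfl

@[simp] lemma rterm_inr {k : ℕ} (i : Fin k) :
    rterm (Term.var (Sum.inr i) : L.Term (α ⊕ Fin k)) = [Sum.inl (Sum.inr i.val)] := rfl

@[simp] lemma rterm_func {k l : ℕ} (f : L.Functions l) (ts : Fin l → L.Term (α ⊕ Fin k)) :
    rterm (Term.func f ts) =
      Sum.inr (l, Encodable.encode f) :: (List.finRange l).flatMap (fun i => rterm (ts i)) := by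
  simp [rterm, Term.listEncode, ttokOf, List.map_flatMap]

@[simp] lemma raw_falsum {k : ℕ} :
    raw (BoundedFormula.falsum : L.BoundedFormula α k) = [nt (k + 2)] := rfl

@[simp] lemma raw_equal {k : ℕ} (t s : L.Term (α ⊕ Fin k)) :
    raw (BoundedFormula.equal t s) = [Sum.inl (k, rterm t), Sum.inl (k, rterm s)] := rfl

@[simp] lemma raw_rel {k l : ℕ} (R : L.Relations l) (ts : Fin l → L.Term (α ⊕ Fin k)) :
    raw (BoundedFormula.rel R ts) = Sum.inr (Sum.inl (l, Encodable.encode R)) :: nt k ::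
      (List.finRange l).map (fun i => Sum.inl (k, rterm (ts i))) := by
  simp [raw, BoundedFormula.listEncode, tokOf]

@[simp] lemma raw_imp {k : ℕ} (φ ψ : L.BoundedFormula α k) :
    raw (φ.imp ψ) = nt 0 :: (raw φ ++ raw ψ) := by
  simp [raw, BoundedFormula.listEncode, tokOf]

@[simp] lemma raw_all {k : ℕ} (φ : L.BoundedFormula α (k + 1)) :
    raw φ.all = nt 1 :: raw φ := rfl

@[simp] lemma raw_not {k : ℕ} (φ : L.BoundedFormula α k) :
    raw φ.not = nt 0 :: (raw φ ++ [nt (k + 2)]) := by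
  rw [BoundedFormula.not]; exact raw_imp _ _

lemma raw_alls {k : ℕ} (φ : L.BoundedFormula α k) :
    raw φ.alls = List.replicate k (nt 1) ++ raw φ := by
  induction k with
  | zero => rfl
  | succ k ih =>
    rw [BoundedFormula.alls, ih, raw_all, List.replicate_succ']
    simp

/-- Quantify universally over the last `d` variables. -/
def allsN {N : ℕ} : ∀ d : ℕ, L.BoundedFormula α (N + d) → L.BoundedFormula α N
  | 0, φ => φ
  | d + 1, φ => allsN d φ.all

lemma raw_allsN {N : ℕ} (d : ℕ) (φ : L.BoundedFormula α (N + d)) :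
    raw (allsN d φ) = List.replicate d (nt 1) ++ raw φ := by
  induction d with
  | zero => rfl
  | succ d ih =>
    rw [allsN, ih, List.replicate_succ']
    simp

lemma realize_allsN {M : Type} [L.Structure M] {N : ℕ} (d : ℕ) (φ : L.BoundedFormula α (N + d))
    (v : α → M) (xs : Fin N → M) : (allsN d φ).Realize v xs ↔
      ∀ zs : Fin (N + d) → M, zs ∘ Fin.castAdd d = xs → φ.Realize v zs := by
  induction d with
  | zero =>
    constructor
    · rintro h zs rfl
      exact h
    · intro h
      exact h xs rfl
  | succ d ih =>
    rw [allsN, ih]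
    simp only [BoundedFormula.realize_all]
    constructor
    · intro h zs hz
      have := h (Fin.init zs) (by rw [← hz]; rfl) (zs (Fin.last _))
      have e : (Fin.snoc (α := fun _ => M) (Fin.init zs) (zs (Fin.last (N + d))) :
          Fin (N + d + 1) → M) = zs := Fin.snoc_init_self (n := N + d) zs
      exact (iff_of_eq (congrArg (φ.Realize v) e)).1 this
    · intro h zs hz a
      refine h _ ?_
      rw [← hz]
      funext i
      exact Fin.snoc_castSucc (α := fun _ => M) a zs (Fin.castAdd d i)

/-- Replace the free variables by the first `K` bound variables. -/
def svar {K : ℕ} (f : α → Fin K) (k : ℕ) : α ⊕ Fin k → β ⊕ Fin (K + k) :=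
  Sum.elim (fun a => Sum.inr (Fin.castAdd k (f a))) (fun i => Sum.inr (Fin.natAdd K i))

/-- Replace the free variables by the first `K` bound variables. -/
def shift {K : ℕ} (f : α → Fin K) : ∀ {k : ℕ}, L.BoundedFormula α k → L.BoundedFormula β (K + k)
  | _, BoundedFormula.falsum => BoundedFormula.falsum
  | _, BoundedFormula.equal t s =>
      BoundedFormula.equal (t.relabel (svar f _)) (s.relabel (svar f _))
  | _, BoundedFormula.rel R ts => BoundedFormula.rel R (fun i => (ts i).relabel (svar f _))
  | _, BoundedFormula.imp φ ψ => (shift f φ).imp (shift f ψ)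
  | _, BoundedFormula.all φ => (shift f φ : L.BoundedFormula β ((K + _) + 1)).all

lemma svar_elim {M : Type} {K k : ℕ} (f : α → Fin K) (v : β → M) (xs : Fin (K + k) → M) :
    (Sum.elim v xs : β ⊕ Fin (K + k) → M) ∘ svar f k =
      Sum.elim (fun a => xs (Fin.castAdd k (f a))) (fun i => xs (Fin.natAdd K i)) := by
  funext x
  rcases x with a | i <;> rfl

lemma realize_shift {M : Type} [L.Structure M] {K : ℕ} (f : α → Fin K) {k : ℕ}
    (φ : L.BoundedFormula α k) (v : β → M) (xs : Fin (K + k) → M) :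
    (shift f φ : L.BoundedFormula β (K + k)).Realize v xs ↔
      φ.Realize (fun a => xs (Fin.castAdd k (f a))) (fun i => xs (Fin.natAdd K i)) := by
  induction φ with
  | falsum => rfl
  | equal t s =>
    simp only [shift, BoundedFormula.Realize, Term.realize_relabel, svar_elim]
  | rel R ts =>
    simp only [shift, BoundedFormula.Realize, Term.realize_relabel, svar_elim]
  | imp φ ψ ih1 ih2 =>
    simp only [shift, BoundedFormula.realize_imp, ih1, ih2]
  | @all k φ ih =>
    simp only [shift, BoundedFormula.realize_all]
    refine forall_congr' fun a => ?_
    refine (ih (Fin.snoc (α := fun _ => M) xs a)).trans ?_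
    have e1 : (fun b => (Fin.snoc (α := fun _ => M) xs a : Fin (K + k + 1) → M)
        (Fin.castAdd (k + 1) (f b))) = fun b => xs (Fin.castAdd k (f b)) := by
      funext b
      exact Fin.snoc_castSucc (α := fun _ => M) a xs (Fin.castAdd k (f b))
    have e2 : (fun i => (Fin.snoc (α := fun _ => M) xs a : Fin (K + k + 1) → M)
        (Fin.natAdd K i)) = Fin.snoc (α := fun _ => M) (fun i => xs (Fin.natAdd K i)) a := by
      funext i
      refine Fin.lastCases ?_ (fun i => ?_) i
      · rw [Fin.snoc_last]
        exact Fin.snoc_last (α := fun _ => M) a xs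
      · rw [Fin.snoc_castSucc]
        exact Fin.snoc_castSucc (α := fun _ => M) a xs (Fin.natAdd K i)
    exact iff_of_eq (congrArg₂ (fun x y => φ.Realize x y) e1 e2)

/-- The effect of `shift` on variables, on raw symbols. -/
def gv (K off j : ℕ) : ℕ := if j + off < K then j + off else 0

/-- The effect of `shift` on raw term symbols. -/
def vtok (K off : ℕ) : TTok → TTok
  | Sum.inl (Sum.inl j) => Sum.inl (Sum.inr (gv K off j))
  | Sum.inl (Sum.inr i) => Sum.inl (Sum.inr (K + i))
  | Sum.inr f => Sum.inr f

/-- The effect of `shift` on raw symbols; the flag says whether the previous symbol was a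
relation symbol. -/
def stok (K off : ℕ) (b : Bool) : Tok → Tok
  | Sum.inl x => Sum.inl (K + x.1, x.2.map (vtok K off))
  | Sum.inr (Sum.inl R) => Sum.inr (Sum.inl R)
  | Sum.inr (Sum.inr j) => nt (if b = false ∧ j < 2 then j else K + j)

/-- Is the symbol a relation symbol? -/
def isRel : Tok → Bool
  | Sum.inr (Sum.inl _) => true
  | _ => false

/-- The effect of `shift` on raw formulas. -/
def rs (K off : ℕ) : Bool → Raw → Raw
  | _, [] => []
  | b, t :: l => stok K off b t :: rs K off (isRel t) l

lemma map_vtok_rterm {K off : ℕ} (f : α → Fin K) (hf : ∀ a, gv K off (Encodable.encode a) = f a)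
    {k : ℕ} (t : L.Term (α ⊕ Fin k)) :
    (rterm t).map (vtok K off) = rterm (t.relabel (svar f k) : L.Term (β ⊕ Fin (K + k))) := by
  induction t with
  | var x =>
    rcases x with a | i
    · simp [svar, vtok, hf, Term.relabel]
    · simp [svar, vtok, Term.relabel]
  | func F ts ih =>
    simp only [rterm_func, List.map_cons, Term.relabel, List.map_flatMap, ih]
    rfl

lemma rs_terms (K off : ℕ) (rest : Raw) (l : List (ℕ × List TTok)) :
    rs K off false (l.map Sum.inl ++ rest) =
      l.map (fun x => Sum.inl (K + x.1, x.2.map (vtok K off))) ++ rs K off false rest := by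
  induction l with
  | nil => rfl
  | cons a l ih => simp [rs, isRel, stok, ih]

lemma rs_raw {K off : ℕ} (f : α → Fin K) (hf : ∀ a, gv K off (Encodable.encode a) = f a)
    {k : ℕ} (φ : L.BoundedFormula α k) (rest : Raw) :
    rs K off false (raw φ ++ rest) =
      raw (shift f φ : L.BoundedFormula β (K + k)) ++ rs K off false rest := by
  induction φ generalizing rest with
  | falsum => simp [shift, rs, stok, isRel, add_assoc]
  | equal t s =>
    simp only [shift, raw_equal, ← map_vtok_rterm (β := β) f hf]
    simp [rs, stok, isRel]
  | @rel k l R ts =>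
    simp only [shift, raw_rel, ← map_vtok_rterm (β := β) f hf]
    have := rs_terms K off rest ((List.finRange l).map (fun i => (k, rterm (ts i))))
    rw [List.map_map, List.map_map] at this
    simp only [rs, stok, isRel, List.cons_append]
    congr 2
  | imp φ ψ ih1 ih2 => simp [shift, rs, stok, isRel, ih1, ih2]
  | all φ ih => simp [shift, rs, stok, isRel, ih]

end RawCodes

section RawReflect

set_option linter.unusedSectionVars false

variable [∀ k, Encodable (L.Functions k)] [∀ k, Encodable (L.Relations k)]
variable {α β : Type} [Encodable α] [Encodable β]

lemma map_finRange_getElem {A : Type} {l : ℕ} (us : List A) (h : us.length = l) :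
    (List.finRange l).map (fun i : Fin l => us[i.val]'(by rw [h]; exact i.2)) = us := by
  subst h
  apply List.ext_getElem
  · simp
  · intro i h1 h2
    simp

lemma term_reflect {K off k : ℕ} (τ : L.Term (β ⊕ Fin (K + k))) : ∀ (l rest' : List TTok),
    l.map (vtok K off) = rterm τ ++ rest' → ∃ (τ' : L.Term (ℕ ⊕ Fin k)) (rest : List TTok),
      l = rterm τ' ++ rest ∧ rest.map (vtok K off) = rest' := by
  induction τ with
  | var x =>
    intro l rest' h
    rcases l with - | ⟨t, l⟩
    · rcases x with a | i <;> simp at h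
    rcases x with a | i
    · rcases t with (j | i') | f <;> simp [vtok] at h
    · rcases t with (j | i') | f
      · simp [vtok] at h
        exact ⟨Term.var (Sum.inl j), l, by simp, h.2⟩
      · simp [vtok] at h
        have hi : i' < k := by have := i.2; omega
        exact ⟨Term.var (Sum.inr ⟨i', hi⟩), l, by simp, h.2⟩
      · simp [vtok] at h
  | @func a f ts ih =>
    intro l rest' h
    have key : ∀ (s : List (Fin a)) (l rest' : List TTok),
        l.map (vtok K off) = s.flatMap (fun i => rterm (ts i)) ++ rest' →
        ∃ (us : List (L.Term (ℕ ⊕ Fin k))) (rest : List TTok), us.length = s.length ∧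
          l = us.flatMap rterm ++ rest ∧ rest.map (vtok K off) = rest' := by
      intro s
      induction s with
      | nil => intro l rest' h; exact ⟨[], l, rfl, by simp, by simpa using h⟩
      | cons i s ihs =>
        intro l rest' h
        rw [List.flatMap_cons, List.append_assoc] at h
        obtain ⟨τ', r, h1, h2⟩ := ih i _ _ h
        obtain ⟨us, r2, h3, h4, h5⟩ := ihs _ _ h2
        exact ⟨τ' :: us, r2, by simp [h3], by simp [h1, h4], h5⟩
    rcases l with - | ⟨t, l⟩
    · simp at h
    rcases t with (j | i') | f'
    · simp [vtok] at h
    · simp [vtok] at h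
    · simp only [rterm_func, List.map_cons, List.cons_append, List.cons.injEq] at h
      obtain ⟨us, r, h3, h4, h5⟩ := key _ _ _ h.2
      rw [List.length_finRange] at h3
      refine ⟨Term.func f (fun i => us[i.val]'(by rw [h3]; exact i.2)), r, ?_, h5⟩
      have h6 := h.1
      simp only [vtok] at h6
      rw [rterm_func, h6, h4]
      conv_lhs => rw [← map_finRange_getElem us h3]
      rw [List.flatMap_map]
      rfl

lemma formula_reflect {K off κ : ℕ} (ψ : L.BoundedFormula β κ) : ∀ (k : ℕ), κ = K + k →
    ∀ (l rest' : Raw), rs K off false l = raw ψ ++ rest' →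
    ∃ (φ : L.BoundedFormula ℕ k) (rest : Raw),
      l = raw φ ++ rest ∧ rs K off false rest = rest' := by
  have term1 : ∀ (k : ℕ) (τ : L.Term (β ⊕ Fin (K + k))) (x : List TTok),
      x.map (vtok K off) = rterm τ → ∃ τ' : L.Term (ℕ ⊕ Fin k), x = rterm τ' := by
    intro k τ x h
    obtain ⟨τ', r, h1, h2⟩ := term_reflect (off := off) τ x [] (by simpa using h)
    rw [List.map_eq_nil_iff] at h2
    subst h2
    exact ⟨τ', by simpa using h1⟩
  induction ψ with
  | falsum =>
    rintro k rfl l rest' h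
    rcases l with - | ⟨t, l⟩
    · simp [rs] at h
    rcases t with t | R | j
    · simp [rs, stok] at h
    · simp [rs, stok] at h
    · simp only [rs, stok, isRel, raw_falsum, List.cons_append, List.cons.injEq, List.nil_append,
        Sum.inr.injEq] at h
      refine ⟨BoundedFormula.falsum, l, ?_, h.2⟩
      have h1 := h.1
      split_ifs at h1 with h2
      · omega
      · have : j = k + 2 := by omega
        simp [this]
  | equal t s =>
    rintro k rfl l rest' h
    rcases l with - | ⟨t1, l⟩
    · simp [rs] at h
    rcases l with - | ⟨t2, l⟩
    · simp [rs] at h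
    rcases t1 with ⟨k1, t1⟩ | R | j
    · rcases t2 with ⟨k2, t2⟩ | R | j
      · simp only [rs, stok, isRel, raw_equal, List.cons_append, List.cons.injEq, List.nil_append,
          Sum.inl.injEq, Prod.mk.injEq, Nat.add_left_cancel_iff] at h
        obtain ⟨⟨rfl, h1⟩, ⟨rfl, h2⟩, h3⟩ := h
        obtain ⟨u1, rfl⟩ := term1 _ _ _ h1
        obtain ⟨u2, rfl⟩ := term1 _ _ _ h2
        exact ⟨BoundedFormula.equal u1 u2, l, by simp, h3⟩
      · simp [rs, stok] at h
      · simp [rs, stok] at h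
    · simp [rs, stok] at h
    · simp [rs, stok] at h
  | @rel κ a R ts =>
    rintro k rfl l rest' h
    have key : ∀ (s : List (Fin a)) (l rest' : Raw),
        rs K off false l = s.map (fun i => Sum.inl (K + k, rterm (ts i))) ++ rest' →
        ∃ (us : List (L.Term (ℕ ⊕ Fin k))) (rest : Raw), us.length = s.length ∧
          l = us.map (fun u => Sum.inl (k, rterm u)) ++ rest ∧ rs K off false rest = rest' := by
      intro s
      induction s with
      | nil => intro l rest' h; exact ⟨[], l, rfl, by simp, by simpa using h⟩
      | cons i s ihs =>
        intro l rest' h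
        rcases l with - | ⟨t1, l⟩
        · simp [rs] at h
        rcases t1 with ⟨k1, t1⟩ | R | j
        · simp only [rs, stok, isRel, List.map_cons, List.cons_append, List.cons.injEq,
            Sum.inl.injEq, Prod.mk.injEq, Nat.add_left_cancel_iff] at h
          obtain ⟨⟨rfl, h1⟩, h3⟩ := h
          obtain ⟨u1, rfl⟩ := term1 _ _ _ h1
          obtain ⟨us, r2, h3, h4, h5⟩ := ihs _ _ h3
          exact ⟨u1 :: us, r2, by simp [h3], by simp [h4], h5⟩
        · simp [rs, stok] at h
        · simp [rs, stok] at h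
    rcases l with - | ⟨t1, l⟩
    · simp [rs] at h
    rcases l with - | ⟨t2, l⟩
    · simp [rs] at h
    rcases t1 with t1 | R1 | j
    · simp [rs, stok] at h
    · rcases t2 with t2 | R2 | j
      · simp [rs, stok] at h
      · simp [rs, stok] at h
      · simp [rs, stok, isRel] at h
        obtain ⟨rfl, rfl, h⟩ := h
        obtain ⟨us, r, h3, h4, h5⟩ := key _ _ _ h
        rw [List.length_finRange] at h3
        refine ⟨BoundedFormula.rel R (fun i => us[i.val]'(by rw [h3]; exact i.2)), r, ?_, h5⟩
        rw [raw_rel, h4]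
        conv_lhs => rw [← map_finRange_getElem us h3]
        rw [List.map_map]
        rfl
    · simp [rs, stok] at h
  | imp φ ψ ih1 ih2 =>
    rintro k rfl l rest' h
    rcases l with - | ⟨t, l⟩
    · simp [rs] at h
    rcases t with t | R | j
    · simp [rs, stok] at h
    · simp [rs, stok] at h
    · simp only [rs, stok, isRel, raw_imp, List.cons_append, List.cons.injEq, List.append_assoc,
        Sum.inr.injEq] at h
      obtain ⟨φ', r1, h3, h4⟩ := ih1 k rfl _ _ h.2
      obtain ⟨ψ', r2, h5, h6⟩ := ih2 k rfl _ _ h4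
      refine ⟨φ'.imp ψ', r2, ?_, h6⟩
      have h1 := h.1
      split_ifs at h1 with h2
      · simp [h1, h3, h5]
      · simp at h2; omega
  | all φ ih =>
    rintro k rfl l rest' h
    rcases l with - | ⟨t, l⟩
    · simp [rs] at h
    rcases t with t | R | j
    · simp [rs, stok] at h
    · simp [rs, stok] at h
    · simp only [rs, stok, isRel, raw_all, List.cons_append, List.cons.injEq,
        Sum.inr.injEq] at h
      obtain ⟨φ', r1, h3, h4⟩ := ih (k + 1) rfl _ _ h.2
      refine ⟨φ'.all, r1, ?_, h4⟩
      have h1 := h.1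
      split_ifs at h1 with h2
      · simp [h1, h3]
      · simp at h2; omega

lemma peel_all {k : ℕ} (ψ : L.BoundedFormula β k) (l : Raw) (h : raw ψ = nt 1 :: l) :
    ∃ φ : L.BoundedFormula β (k + 1), raw φ = l ∧ ψ = φ.all := by
  cases ψ with
  | falsum => simp at h
  | equal t s => simp at h
  | rel R ts => simp at h
  | imp φ ψ => simp at h
  | all φ => exact ⟨φ, by simpa using h, rfl⟩

lemma peel_alls (d : ℕ) : ∀ {k : ℕ} (ψ : L.BoundedFormula β k) (l : Raw),
    raw ψ = List.replicate d (nt 1) ++ l → ∃ φ : L.BoundedFormula β (d + k), raw φ = l := by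
  induction d with
  | zero => intro k ψ l h; rw [Nat.zero_add]; exact ⟨ψ, by simpa using h⟩
  | succ d ih =>
    intro k ψ l h
    rw [List.replicate_succ, List.cons_append] at h
    obtain ⟨φ, h1, -⟩ := peel_all ψ _ h
    obtain ⟨φ', h2⟩ := ih φ l h1
    rw [show d + 1 + k = d + (k + 1) by omega]
    exact ⟨φ', h2⟩

/-- The first symbol determines the formula `⊥`. -/
lemma peel_falsum {k : ℕ} (ψ : L.BoundedFormula β k) (l l' : Raw) (j : ℕ)
    (h : raw ψ ++ l = nt (j + 2) :: l') : l = l' := by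
  cases ψ with
  | falsum => simp at h; exact h.2
  | equal t s => simp at h
  | rel R ts => simp at h
  | imp φ ψ => simp at h
  | all φ => simp at h

lemma peel_imp_falsum {k j : ℕ} (ψ : L.BoundedFormula β k) (l : Raw)
    (h : raw ψ = nt 0 :: nt (j + 2) :: l) : ∃ φ : L.BoundedFormula β k, raw φ = l := by
  cases ψ with
  | falsum => simp at h
  | equal t s => simp at h
  | rel R ts => simp at h
  | imp φ ψ =>
    simp only [raw_imp, List.cons.injEq, true_and] at h
    exact ⟨ψ, peel_falsum φ _ _ _ h⟩
  | all φ => simp at h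

lemma encode_le_of_mem {A : Type} [Encodable A] {a : A} {l : List A} (h : a ∈ l) :
    Encodable.encode a < Encodable.encode l := by
  induction l with
  | nil => simp at h
  | cons b l ih =>
    rw [Encodable.encode_list_cons]
    rcases List.mem_cons.1 h with rfl | h
    · exact Nat.lt_succ_of_le (Nat.left_le_pair _ _)
    · exact (ih h).trans_le ((Nat.right_le_pair _ _).trans (Nat.le_succ _))

lemma term_agree {M : Type} [L.Structure M] {k : ℕ} (t : L.Term (ℕ ⊕ Fin k)) (B : ℕ)
    (hB : ∀ y ∈ rterm t, Encodable.encode y < B) (v v' : ℕ → M) (h : ∀ j < B, v j = v' j)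
    (xs : Fin k → M) : t.realize (Sum.elim v xs) = t.realize (Sum.elim v' xs) := by
  induction t with
  | var x =>
    rcases x with j | i
    · have := hB _ (by rw [rterm_inl]; exact List.mem_singleton_self _)
      simp at this
      exact h j (by omega)
    · rfl
  | func f ts ih =>
    rw [Term.realize_func, Term.realize_func]
    congr 1
    funext i
    refine ih i fun y hy => hB y ?_
    rw [rterm_func]
    exact List.mem_cons_of_mem _ (List.mem_flatMap.2 ⟨i, List.mem_finRange i, hy⟩)

lemma formula_agree {M : Type} [L.Structure M] {k : ℕ} (φ : L.BoundedFormula ℕ k) (B : ℕ)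
    (hB : ∀ y ∈ raw φ, Encodable.encode y < B) (v v' : ℕ → M) (h : ∀ j < B, v j = v' j)
    (xs : Fin k → M) : φ.Realize v xs ↔ φ.Realize v' xs := by
  have key : ∀ (k : ℕ) (t : L.Term (ℕ ⊕ Fin k)) (xs : Fin k → M),
      Encodable.encode (Sum.inl (k, rterm t) : Tok) < B →
      t.realize (Sum.elim v xs) = t.realize (Sum.elim v' xs) := by
    intro k t xs ht
    refine term_agree t B (fun y hy => ?_) v v' h xs
    have h1 := encode_le_of_mem hy
    have h2 := Nat.right_le_pair k (Encodable.encode (rterm t))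
    simp at ht
    omega
  induction φ with
  | falsum => rfl
  | @equal k t s =>
    simp only [BoundedFormula.Realize]
    rw [key k t xs (hB _ (by simp)), key k s xs (hB _ (by simp))]
  | @rel k a R ts =>
    simp only [BoundedFormula.Realize]
    have : (fun i => (ts i).realize (Sum.elim v xs)) =
        fun i => (ts i).realize (Sum.elim v' xs) := by
      funext i
      refine key k (ts i) xs (hB _ ?_)
      rw [raw_rel]
      exact List.mem_cons_of_mem _ (List.mem_cons_of_mem _
        (List.mem_map.2 ⟨i, List.mem_finRange i, rfl⟩))
    rw [this]
  | imp φ ψ ih1 ih2 =>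
    rw [BoundedFormula.realize_imp, BoundedFormula.realize_imp]
    exact imp_congr (ih1 (fun y hy => hB y (by simp [hy])) xs)
      (ih2 (fun y hy => hB y (by simp [hy])) xs)
  | all φ ih =>
    rw [BoundedFormula.realize_all, BoundedFormula.realize_all]
    exact forall_congr' fun a => ih (fun y hy => hB y (by simp [hy])) _

end RawReflect

section RawComp

lemma gv_primrec (off : ℕ) : Primrec₂ (fun K j => gv K off j) :=
  Primrec.ite (Primrec.nat_lt.comp (Primrec.nat_add.comp Primrec.snd (Primrec.const off)) Primrec.fst)
    (Primrec.nat_add.comp Primrec.snd (Primrec.const off)) (Primrec.const 0)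

lemma vtok_primrec (off : ℕ) : Primrec₂ (fun K t => vtok K off t) := by
  have h1 : Primrec₂ (fun (a : ℕ × TTok) (x : ℕ ⊕ ℕ) =>
      (Sum.casesOn x (fun j => Sum.inl (Sum.inr (gv a.1 off j)))
        (fun i => Sum.inl (Sum.inr (a.1 + i))) : TTok)) := by
    refine Primrec.sumCasesOn (f := fun y : (ℕ × TTok) × (ℕ ⊕ ℕ) => y.2) Primrec.snd ?_ ?_
    · exact Primrec.sumInl.comp (Primrec.sumInr.comp ((gv_primrec off).comp
        (Primrec.fst.comp (Primrec.fst.comp Primrec.fst)) Primrec.snd))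
    · exact Primrec.sumInl.comp (Primrec.sumInr.comp (Primrec.nat_add.comp
        (Primrec.fst.comp (Primrec.fst.comp Primrec.fst)) Primrec.snd))
  have h2 : Primrec₂ (fun (_ : ℕ × TTok) (x : ℕ × ℕ) => (Sum.inr x : TTok)) :=
    Primrec.sumInr.comp Primrec.snd
  exact (Primrec.sumCasesOn (f := fun y : ℕ × TTok => y.2) Primrec.snd h1 h2).of_eq (by
    rintro ⟨K, (j | i) | f⟩ <;> rfl)

lemma stok_primrec (off : ℕ) :
    Primrec (fun x : ℕ × Bool × Tok => stok x.1 off x.2.1 x.2.2) := by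
  have h1 : Primrec₂ (fun (a : ℕ × Bool × Tok) (x : ℕ × List TTok) =>
      (Sum.inl (a.1 + x.1, x.2.map (vtok a.1 off)) : Tok)) := by
    refine Primrec.sumInl.comp (Primrec.pair (Primrec.nat_add.comp (Primrec.fst.comp Primrec.fst)
      (Primrec.fst.comp Primrec.snd)) (Primrec.list_map (Primrec.snd.comp Primrec.snd) ?_))
    exact (vtok_primrec off).comp (Primrec.fst.comp (Primrec.fst.comp Primrec.fst)) Primrec.snd
  have h2 : Primrec₂ (fun (a : ℕ × Bool × Tok) (x : (ℕ × ℕ) ⊕ ℕ) =>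
      (Sum.casesOn x (fun R => Sum.inr (Sum.inl R))
        (fun j => nt (if a.2.1 = false ∧ j < 2 then j else a.1 + j)) : Tok)) := by
    refine Primrec.sumCasesOn (f := fun y : (ℕ × Bool × Tok) × ((ℕ × ℕ) ⊕ ℕ) => y.2)
      Primrec.snd ?_ ?_
    · exact Primrec.sumInr.comp (Primrec.sumInl.comp Primrec.snd)
    · refine Primrec.sumInr.comp (Primrec.sumInr.comp (Primrec.ite (PrimrecPred.and
        (Primrec.eq.comp ?_ (Primrec.const false)) (Primrec.nat_lt.comp Primrec.snd
          (Primrec.const 2))) Primrec.snd (Primrec.nat_add.comp ?_ Primrec.snd)))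
      · exact Primrec.fst.comp (Primrec.snd.comp (Primrec.fst.comp Primrec.fst))
      · exact Primrec.fst.comp (Primrec.fst.comp Primrec.fst)
  exact (Primrec.sumCasesOn (f := fun y : ℕ × Bool × Tok => y.2.2)
    (Primrec.snd.comp Primrec.snd) h1 h2).of_eq (by
    rintro ⟨K, b, t | R | j⟩ <;> rfl)

lemma isRel_primrec : Primrec isRel := by
  have h2 : Primrec₂ (fun (_ : Tok) (x : (ℕ × ℕ) ⊕ ℕ) =>
      (Sum.casesOn x (fun _ => true) (fun _ => false) : Bool)) :=
    Primrec.sumCasesOn (f := fun y : Tok × ((ℕ × ℕ) ⊕ ℕ) => y.2) Primrec.snd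
      (Primrec.const true) (Primrec.const false)
  exact (Primrec.sumCasesOn (f := fun y : Tok => y) (g := fun _ _ => false)
    Primrec.id (Primrec.const false) h2).of_eq (by
    rintro (t | R | j) <;> rfl)

lemma rs_foldl (K off : ℕ) (l : Raw) : ∀ (b : Bool) (acc : Raw),
    (l.foldl (fun (s : Bool × Raw) t => (isRel t, s.2 ++ [stok K off s.1 t])) (b, acc)).2 =
      acc ++ rs K off b l := by
  induction l with
  | nil => intro b acc; simp [rs]
  | cons t l ih => intro b acc; rw [List.foldl_cons, ih]; simp [rs]

lemma rs_primrec (off : ℕ) : Primrec₂ (fun K l => rs K off false l) := by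
  have h : Primrec₂ (fun (a : ℕ × Raw) (s : (Bool × Raw) × Tok) =>
      (isRel s.2, s.1.2 ++ [stok a.1 off s.1.1 s.2])) := by
    refine Primrec.pair (isRel_primrec.comp (Primrec.snd.comp Primrec.snd))
      (Primrec.list_append.comp (Primrec.snd.comp (Primrec.fst.comp Primrec.snd))
        (Primrec.list_cons.comp ((stok_primrec off).comp (Primrec.pair ?_ (Primrec.pair ?_ ?_)))
          (Primrec.const [])))
    · exact Primrec.fst.comp Primrec.fst
    · exact Primrec.fst.comp (Primrec.fst.comp Primrec.snd)
    · exact Primrec.snd.comp Primrec.snd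
  exact (Primrec.snd.comp (Primrec.list_foldl (f := fun a : ℕ × Raw => a.2)
    (g := fun _ => (false, ([] : Raw))) Primrec.snd (Primrec.const _) h)).of_eq (by
      rintro ⟨K, l⟩
      exact (rs_foldl K off l false []).trans (by simp))

lemma repl_primrec : Primrec (fun d : ℕ => List.replicate d (nt 1)) := by
  exact (Primrec.list_map (f := List.range) (g := fun _ _ => nt 1) Primrec.list_range
    (Primrec.const _)).of_eq (by intro d; simp)

lemma nt_primrec : Primrec nt := Primrec.sumInr.comp Primrec.sumInr

/-- Closure of computable predicates under composition. -/
lemma cp_comp {A B : Type} [Primcodable A] [Primcodable B] {P : B → Prop}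
    (hP : ComputablePred P) {f : A → B} (hf : Computable f) : ComputablePred (fun a => P (f a)) := by
  obtain ⟨_, h⟩ := hP
  exact ⟨fun a => inferInstance, h.comp hf⟩

lemma cp_and {A : Type} [Primcodable A] {P Q : A → Prop}
    (hP : ComputablePred P) (hQ : ComputablePred Q) : ComputablePred (fun a => P a ∧ Q a) := by
  obtain ⟨_, h⟩ := hP
  obtain ⟨_, h'⟩ := hQ
  refine ⟨fun a => inferInstance, ?_⟩
  exact (Primrec.and.to_comp.comp h h').of_eq (by intro a; simp)

lemma cp_or {A : Type} [Primcodable A] {P Q : A → Prop}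
    (hP : ComputablePred P) (hQ : ComputablePred Q) : ComputablePred (fun a => P a ∨ Q a) := by
  obtain ⟨_, h⟩ := hP
  obtain ⟨_, h'⟩ := hQ
  refine ⟨fun a => inferInstance, ?_⟩
  exact (Primrec.or.to_comp.comp h h').of_eq (by intro a; simp)

/-- A predicate such that both it and its complement are projections of computable
predicates is computable. -/
lemma cp_of_exists {A : Type} [Primcodable A] {P : A → Prop} {Q R : A × ℕ → Prop}
    (hQ : ComputablePred Q) (hR : ComputablePred R) (h1 : ∀ a, P a ↔ ∃ k, Q (a, k))
    (h2 : ∀ a, ¬ P a ↔ ∃ k, R (a, k)) : ComputablePred P := by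
  classical
  have hex : ∀ a, ∃ k, Q (a, k) ∨ R (a, k) := by
    intro a
    by_cases h : P a
    · obtain ⟨k, hk⟩ := (h1 a).1 h
      exact ⟨k, Or.inl hk⟩
    · obtain ⟨k, hk⟩ := (h2 a).1 h
      exact ⟨k, Or.inr hk⟩
  have hf : Computable (fun a => Nat.find (hex a)) :=
    Computable.find (P := fun a k => Q (a, k) ∨ R (a, k)) (cp_or hQ hR) hex
  refine (cp_comp hQ (Computable.pair Computable.id hf)).of_eq fun a => ?_
  refine ⟨fun h => (h1 a).2 ⟨_, h⟩, fun h => ?_⟩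
  rcases Nat.find_spec (hex a) with h3 | h3
  · exact h3
  · exact absurd h ((h2 a).2 ⟨_, h3⟩)

end RawComp

section Decide

set_option linter.unusedSectionVars false

variable [∀ k, Encodable (L.Functions k)] [∀ k, Encodable (L.Relations k)]
variable {T : L.Theory} {n m : ℕ} {p : Set (L.Formula (Fin n))} {q : Set (L.Formula (Fin m))}

/-- The raw list is the raw form of a formula in `p`. -/
def PR {n : ℕ} (p : Set (L.Formula (Fin n))) (l : Raw) : Prop :=
  ∃ φ : L.Formula (Fin n), raw φ = l ∧ φ ∈ p

lemma PR_computable (hd : DecidableType p) : ComputablePred (PR p) := by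
  refine (cp_comp hd (f := fun l : Raw => Encodable.encode l) Computable.encode).of_eq fun l => ?_
  refine exists_congr fun φ => and_congr ?_ Iff.rfl
  rw [← encode_raw]
  exact Encodable.encode_inj

/-- The raw list is the raw form of a formula. -/
def VR (L : FirstOrder.Language.{0, 0})
    [∀ k, Encodable (L.Functions k)] [∀ k, Encodable (L.Relations k)] (l : Raw) : Prop :=
  ∃ φ : L.Formula ℕ, raw φ = l

/-- The substitution of free variables by bound variables. -/
def fv (K : ℕ) (hK : 0 < K) (j : ℕ) : Fin K :=
  ⟨gv K 0 j, by unfold gv; split_ifs with h <;> omega⟩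

lemma VR_iff (hp : IsTypeOf T p) (l : Raw) : VR L l ↔
    PR p (List.replicate (Encodable.encode l + 1) (nt 1) ++ nt 0 :: nt (Encodable.encode l + 1 + 2) ::
      rs (Encodable.encode l + 1) 0 false l) := by
  set K := Encodable.encode l + 1 with hK
  constructor
  · rintro ⟨φ, rfl⟩
    let ψ : L.BoundedFormula (Fin n) K :=
      BoundedFormula.imp BoundedFormula.falsum
        (shift (fv K (Nat.succ_pos _)) φ : L.BoundedFormula (Fin n) (K + 0))
    refine ⟨ψ.alls, ?_, ?_⟩
    · rw [raw_alls, raw_imp, raw_falsum]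
      have := rs_raw (off := 0) (β := Fin n) (fv K (Nat.succ_pos _)) (fun _ => rfl) φ []
      simp only [List.append_nil, rs] at this
      rw [this]
      rfl
    · obtain ⟨M, -, a, rfl⟩ := hp
      exact BoundedFormula.realize_alls.2 fun xs h => h.elim
  · rintro ⟨ψ, h, -⟩
    obtain ⟨φ, h1⟩ := peel_alls _ _ _ h
    obtain ⟨φ2, h2⟩ := peel_imp_falsum _ _ h1
    obtain ⟨φ3, r, h3, h4⟩ := formula_reflect (off := 0) φ2 0 rfl l [] (by rw [h2]; simp)
    rcases r with - | ⟨t, r⟩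
    · exact ⟨φ3, by simpa using h3.symm⟩
    · simp [rs] at h4

lemma VR_computable (hp : IsTypeOf T p) (hd : DecidableType p) : ComputablePred (VR L) := by
  have hK : Primrec (fun l : Raw => Encodable.encode l + 1) :=
    Primrec.succ.comp Primrec.encode
  refine (cp_comp (PR_computable hd) (Primrec.to_comp ?_)).of_eq fun l => (VR_iff hp l).symm
  refine Primrec.list_append.comp (repl_primrec.comp hK) (Primrec.list_cons.comp (Primrec.const _)
    (Primrec.list_cons.comp (nt_primrec.comp (Primrec.nat_add.comp hK (Primrec.const 2)))
      ((rs_primrec 0).comp hK Primrec.id)))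

/-- Raw form of the sentence expressing that `τ` follows from finite parts of `p`, `q`, `χ`. -/
def sentR (n m : ℕ) (χr l1 l2 τ : Raw) : Raw :=
  List.replicate (n + m) (nt 1) ++ nt 0 :: (rs (n + m) 0 false l1 ++
    nt 0 :: (rs (n + m) n false l2 ++ nt 0 :: (χr ++ τ)))

/-- `τ` is derivable. -/
def ProvR (p : Set (L.Formula (Fin n))) (q : Set (L.Formula (Fin m)))
    (χr τ : Raw) : Prop :=
  ∃ l1 l2 : Raw, PR p l1 ∧ PR q l2 ∧ PR p (sentR n m χr l1 l2 τ)

/-- The formula `χ` with free variables turned into bound ones. -/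
def chiS (χ : L.Formula (Fin (n + m))) : L.BoundedFormula (Fin n) (n + m) :=
  (shift id χ : L.BoundedFormula (Fin n) (n + m + 0))

lemma realize_chiS (χ : L.Formula (Fin (n + m))) {M : Type} [L.Structure M] (v : Fin n → M)
    (xs : Fin (n + m) → M) : (chiS χ).Realize v xs ↔ χ.Realize xs := by
  refine (realize_shift (id : Fin (n + m) → Fin (n + m)) χ v xs).trans ?_
  exact iff_of_eq (congrArg (BoundedFormula.Realize χ _) (Subsingleton.elim _ _))

/-- The sentence as a formula. -/
def sentF (χ : L.Formula (Fin (n + m))) (p1 : L.Formula (Fin n)) (q1 : L.Formula (Fin m))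
    (τ : L.BoundedFormula (Fin n) (n + m)) : L.Formula (Fin n) :=
  BoundedFormula.alls (n := n + m)
    ((shift (Fin.castAdd m) p1 : L.BoundedFormula (Fin n) (n + m + 0)).imp
      ((shift (Fin.natAdd n) q1 : L.BoundedFormula (Fin n) (n + m + 0)).imp
        ((chiS χ).imp τ)))

lemma raw_sentF (χ : L.Formula (Fin (n + m))) (p1 : L.Formula (Fin n)) (q1 : L.Formula (Fin m))
    (τ : L.BoundedFormula (Fin n) (n + m)) :
    raw (sentF χ p1 q1 τ) = sentR n m (raw (chiS χ)) (raw p1) (raw q1) (raw τ) := by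
  rw [sentF, raw_alls]
  have h1 := rs_raw (off := 0) (β := Fin n) (Fin.castAdd m) (fun a => by
    have : (a : ℕ) + 0 < n + m := by have := a.2; omega
    have e : Encodable.encode a = a.val := rfl
    simp only [e, gv, Fin.val_castAdd]
    rw [if_pos this]; rfl) p1 []
  have h2 := rs_raw (off := n) (β := Fin n) (Fin.natAdd n) (fun a => by
    have : (a : ℕ) + n < n + m := by have := a.2; omega
    have e : Encodable.encode a = a.val := rfl
    simp only [e, gv, Fin.val_natAdd]
    rw [if_pos this, add_comm]) q1 []
  simp only [List.append_nil, rs] at h1 h2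
  rw [sentR, h1, h2]
  simp only [Nat.add_zero, raw_imp]

lemma realize_sentF (χ : L.Formula (Fin (n + m))) (p1 : L.Formula (Fin n)) (q1 : L.Formula (Fin m))
    (τ : L.BoundedFormula (Fin n) (n + m)) {M : Type} [L.Structure M] (v : Fin n → M) :
    (sentF χ p1 q1 τ).Realize v ↔ ∀ a : Fin (n + m) → M, p1.Realize (a ∘ Fin.castAdd m) →
      q1.Realize (a ∘ Fin.natAdd n) → χ.Realize a → τ.Realize v a := by
  refine BoundedFormula.realize_alls.trans (forall_congr' fun a => ?_)
  rw [BoundedFormula.realize_imp, BoundedFormula.realize_imp, BoundedFormula.realize_imp,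
    realize_chiS]
  refine imp_congr ?_ (imp_congr ?_ Iff.rfl)
  · refine (realize_shift (Fin.castAdd m) p1 v a).trans ?_
    exact iff_of_eq (congrArg (BoundedFormula.Realize p1 _) (Subsingleton.elim _ _))
  · refine (realize_shift (Fin.natAdd n) q1 v a).trans ?_
    exact iff_of_eq (congrArg (BoundedFormula.Realize q1 _) (Subsingleton.elim _ _))

/-- The formula `τ` with bound variables made free. -/
def freeF (τ : L.BoundedFormula (Fin n) (n + m)) : L.Formula (Fin (n + m)) :=
  τ.toFormula.relabel (Sum.elim (Fin.castAdd m) id)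

lemma realize_freeF (τ : L.BoundedFormula (Fin n) (n + m)) {M : Type} [L.Structure M]
    (a : Fin (n + m) → M) : (freeF τ).Realize a ↔ τ.Realize (a ∘ Fin.castAdd m) a := by
  rw [freeF, Formula.realize_relabel, BoundedFormula.realize_toFormula]
  rfl

lemma raw_inj {α : Type} [Encodable α] {k : ℕ} {φ ψ : L.BoundedFormula α k}
    (h : raw φ = raw ψ) : φ = ψ := by
  have h1 : fmlCode φ = fmlCode ψ := by rw [← encode_raw, ← encode_raw, h]
  have h2 : φ.listEncode = ψ.listEncode := Encodable.encode_inj.1 h1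
  have h3 := BoundedFormula.listDecode_encode_list (L := L) (α := α) [⟨k, φ⟩]
  have h4 := BoundedFormula.listDecode_encode_list (L := L) (α := α) [⟨k, ψ⟩]
  simp only [List.flatMap_cons, List.flatMap_nil, List.append_nil] at h3 h4
  rw [h2, h4] at h3
  simpa using h3.symm

lemma prov_iff (hp : IsTypeOf T p) (hq : IsTypeOf T q) (χ : L.Formula (Fin (n + m)))
    (τ : L.BoundedFormula (Fin n) (n + m))
    (hτ : ∀ (M : Type) [L.Structure M] (v v' : Fin n → M) (a : Fin (n + m) → M),
      τ.Realize v a → τ.Realize v' a) :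
    ProvR p q (raw (chiS χ)) (raw τ) ↔ ∀ M : Mdl T, Countable M → ∀ a : Fin (n + m) → M,
      Joint p q M a → χ.Realize a → (freeF τ).Realize a := by
  classical
  constructor
  · rintro ⟨l1, l2, ⟨p1, rfl, h1⟩, ⟨q1, rfl, h2⟩, ⟨σ, h3, h4⟩⟩ M hM a hJ hχ
    rw [← raw_sentF] at h3
    rw [raw_inj h3] at h4
    rw [← hJ.1] at h1 h4
    rw [← hJ.2] at h2
    rw [realize_freeF]
    exact (realize_sentF _ _ _ _ _).1 h4 a h1 h2 hχ
  · intro h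
    by_contra hn
    obtain ⟨M, hM, a, hJ, ha⟩ := joint_compact hp hq {χ, (freeF τ).not} (by
      intro p1 h1 q1 h2 F hF
      obtain ⟨M, hM, b, hb⟩ := id hp
      have h3 : ¬ (sentF χ p1 q1 τ).Realize b := by
        intro h3
        refine hn ⟨raw p1, raw q1, ⟨p1, rfl, h1⟩, ⟨q1, rfl, h2⟩, ⟨sentF χ p1 q1 τ, raw_sentF _ _ _ _, ?_⟩⟩
        rw [← hb]
        exact h3
      rw [realize_sentF] at h3
      push Not at h3
      obtain ⟨a, h4, h5, h6, h7⟩ := h3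
      refine ⟨M, a, h4, h5, fun φ hφ => ?_⟩
      rcases hF hφ with rfl | hφ
      · exact h6
      · rw [Set.mem_singleton_iff] at hφ
        subst hφ
        rw [Formula.realize_not, realize_freeF]
        exact fun h8 => h7 (hτ M _ _ a h8))
    have h1 := ha _ (Set.mem_insert _ _)
    have h2 := ha _ (Set.mem_insert_of_mem _ rfl)
    rw [Formula.realize_not] at h2
    exact h2 (h M hM a hJ h1)

end Decide

section Consistent

set_option linter.unusedSectionVars false

variable [∀ k, Encodable (L.Functions k)] [∀ k, Encodable (L.Relations k)]
variable {T : L.Theory} {n m : ℕ} {p : Set (L.Formula (Fin n))} {q : Set (L.Formula (Fin m))}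

/-- `φ` is consistent with `p`, `q`, `χ` in the initial variables. -/
def EF (T : L.Theory) (p : Set (L.Formula (Fin n))) (q : Set (L.Formula (Fin m)))
    (χ : L.Formula (Fin (n + m))) (φ : L.Formula ℕ) : Prop :=
  ∃ M : Mdl T, Countable M ∧ ∃ v : ℕ → M, Joint p q M (fun i : Fin (n + m) => v i) ∧
    χ.Realize (fun i : Fin (n + m) => v i) ∧ φ.Realize v

/-- The statement that no extension of the initial tuple satisfies `φ`. -/
def tauF (n m : ℕ) (φ : L.Formula ℕ) : L.BoundedFormula (Fin n) (n + m) :=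
  allsN (Encodable.encode (raw φ) + 1)
    (shift (fv (n + m + (Encodable.encode (raw φ) + 1)) (Nat.succ_pos _)) φ.not :
      L.BoundedFormula (Fin n) (n + m + (Encodable.encode (raw φ) + 1) + 0))

/-- The raw form of `tauF`. -/
def tauR (n m : ℕ) (l : Raw) : Raw :=
  List.replicate (Encodable.encode l + 1) (nt 1) ++
    rs (n + m + (Encodable.encode l + 1)) 0 false (nt 0 :: (l ++ [nt 2]))

lemma raw_tauF (φ : L.Formula ℕ) : raw (tauF n m φ) = tauR n m (raw φ) := by
  rw [tauF, raw_allsN, tauR]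
  have := rs_raw (off := 0) (β := Fin n)
    (fv (n + m + (Encodable.encode (raw φ) + 1)) (Nat.succ_pos _)) (fun _ => rfl) φ.not []
  simp only [List.append_nil, rs] at this
  have e : raw φ.not = nt 0 :: (raw φ ++ [nt 2]) := raw_not φ
  rw [← e, this]

lemma realize_tauF (φ : L.Formula ℕ) {M : Type} [L.Structure M] (w : Fin n → M)
    (a : Fin (n + m) → M) : (tauF n m φ).Realize w a ↔
      ∀ v : ℕ → M, (fun i : Fin (n + m) => v i) = a → ¬ φ.Realize v := by
  set K := n + m + (Encodable.encode (raw φ) + 1) with hK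
  have hKp : 0 < K := Nat.succ_pos _
  have key : ∀ zs : Fin K → M, (shift (fv K hKp) φ.not :
      L.BoundedFormula (Fin n) (K + 0)).Realize w zs ↔ ¬ φ.Realize (fun j => zs (fv K hKp j)) := by
    intro zs
    refine (realize_shift (fv K hKp) φ.not w zs).trans ?_
    rw [← Formula.realize_not]
    exact iff_of_eq (congrArg (BoundedFormula.Realize φ.not _) (Subsingleton.elim _ _))
  have hfv : ∀ j (hj : j < K), fv K hKp j = ⟨j, hj⟩ := by
    intro j hj
    apply Fin.ext
    simp [fv, gv, hj]
  refine (realize_allsN _ _ w a).trans ?_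
  constructor
  · intro h v hv hφ
    refine (key (fun i => v i)).1 (h (fun i => v i) ?_) ?_
    · rw [← hv]; rfl
    · refine (formula_agree φ (Encodable.encode (raw φ)) (fun y hy => encode_le_of_mem hy) _ _
        (fun j hj => ?_) _).1 hφ
      rw [hfv j (by omega)]
  · intro h zs hz
    refine (key zs).2 (h _ ?_)
    rw [← hz]
    funext i
    rw [hfv i (by have := i.2; omega)]
    rfl

/-- `χ` isolates a completion. -/
def Isolates (T : L.Theory) (p : Set (L.Formula (Fin n))) (q : Set (L.Formula (Fin m)))
    (χ : L.Formula (Fin (n + m))) : Prop :=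
  (∃ M : Mdl T, Countable M ∧ ∃ a : Fin (n + m) → M, Joint p q M a ∧ χ.Realize a) ∧
      ∀ M N : Mdl T, Countable M → Countable N → ∀ (a : Fin (n + m) → M) (b : Fin (n + m) → N),
        Joint p q M a → Joint p q N b → χ.Realize a → χ.Realize b →
          typeOf (L := L) M a = typeOf N b

lemma EF_iff_not (χ : L.Formula (Fin (n + m))) (φ : L.Formula ℕ) :
    ¬ EF T p q χ φ ↔ ∀ M : Mdl T, Countable M → ∀ a : Fin (n + m) → M,
      Joint p q M a → χ.Realize a → (freeF (tauF n m φ)).Realize a := by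
  constructor
  · intro h M hM a hJ hχ
    rw [realize_freeF, realize_tauF]
    rintro v rfl hφ
    exact h ⟨M, hM, v, hJ, hχ, hφ⟩
  · rintro h ⟨M, hM, v, hJ, hχ, hφ⟩
    have := h M hM _ hJ hχ
    rw [realize_freeF, realize_tauF] at this
    exact this v rfl hφ

lemma EF_iff {χ : L.Formula (Fin (n + m))} (hi : Isolates T p q χ) (φ : L.Formula ℕ) :
    EF T p q χ φ ↔ ∀ M : Mdl T, Countable M → ∀ a : Fin (n + m) → M,
      Joint p q M a → χ.Realize a → (freeF (tauF n m φ).not).Realize a := by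
  constructor
  · rintro ⟨M, hM, v, hJ, hχ, hφ⟩ N hN b hJb hχb
    have h1 : freeF (tauF n m φ).not ∈ typeOf (L := L) M (fun i : Fin (n + m) => v i) := by
      change (freeF (tauF n m φ).not).Realize _
      rw [realize_freeF, BoundedFormula.realize_not, realize_tauF]
      exact fun h => h v rfl hφ
    rw [hi.2 M N hM hN _ b hJ hJb hχ hχb] at h1
    exact h1
  · intro h
    by_contra hn
    obtain ⟨M, hM, a, hJ, hχ⟩ := hi.1
    have h1 := (EF_iff_not χ φ).1 hn M hM a hJ hχ
    have h2 := h M hM a hJ hχ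
    rw [realize_freeF] at h1 h2
    rw [BoundedFormula.realize_not] at h2
    exact h2 h1

/-- Consistency of raw formulas. -/
def ER (T : L.Theory) (p : Set (L.Formula (Fin n))) (q : Set (L.Formula (Fin m)))
    (χ : L.Formula (Fin (n + m))) (l : Raw) : Prop :=
  ∃ φ : L.Formula ℕ, raw φ = l ∧ EF T p q χ φ

lemma ER_raw {χ : L.Formula (Fin (n + m))} {φ : L.Formula ℕ} :
    ER T p q χ (raw φ) ↔ EF T p q χ φ := by
  constructor
  · rintro ⟨ψ, h1, h2⟩
    rw [← raw_inj h1]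
    exact h2
  · exact fun h => ⟨φ, rfl, h⟩

lemma tau_indep (φ : L.Formula ℕ) (M : Type) [L.Structure M] (v v' : Fin n → M)
    (a : Fin (n + m) → M) : (tauF n m φ).Realize v a → (tauF n m φ).Realize v' a := by
  rw [realize_tauF, realize_tauF]
  exact id

lemma ER_iff (hp : IsTypeOf T p) (hq : IsTypeOf T q) {χ : L.Formula (Fin (n + m))}
    (hi : Isolates T p q χ) (l : Raw) : ER T p q χ l ↔
      VR L l ∧ ProvR p q (raw (chiS χ)) (nt 0 :: (tauR n m l ++ [nt (n + m + 2)])) := by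
  constructor
  · rintro ⟨φ, rfl, h⟩
    refine ⟨⟨φ, rfl⟩, ?_⟩
    rw [← raw_tauF, ← raw_not]
    rw [prov_iff hp hq]
    · exact (EF_iff hi φ).1 h
    · intro M _ v v' a h
      rw [BoundedFormula.realize_not] at h ⊢
      exact fun h2 => h (tau_indep φ M _ _ a h2)
  · rintro ⟨⟨φ, rfl⟩, h⟩
    rw [← raw_tauF, ← raw_not] at h
    rw [prov_iff hp hq] at h
    · exact ER_raw.2 ((EF_iff hi φ).2 h)
    · intro M _ v v' a h
      rw [BoundedFormula.realize_not] at h ⊢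
      exact fun h2 => h (tau_indep φ M _ _ a h2)

lemma ER_iff_not (hp : IsTypeOf T p) (hq : IsTypeOf T q) (χ : L.Formula (Fin (n + m)))
    (l : Raw) : ¬ ER T p q χ l ↔ ¬ VR L l ∨ ProvR p q (raw (chiS χ)) (tauR n m l) := by
  by_cases hV : VR L l
  · obtain ⟨φ, rfl⟩ := hV
    rw [ER_raw, EF_iff_not, ← raw_tauF, prov_iff hp hq χ _ (tau_indep φ)]
    simp only [show VR L (raw φ) from ⟨φ, rfl⟩, not_true, false_or]
  · simp only [hV, not_false_eq_true, true_or, iff_true]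
    rintro ⟨φ, h, -⟩
    exact hV ⟨φ, h⟩

/-- Decode a pair of raw lists. -/
def dec2 (k : ℕ) : Raw × Raw := (Encodable.decode (α := Raw × Raw) k).getD ([], [])

lemma dec2_computable : Computable dec2 :=
  Computable.option_getD Computable.decode (Computable.const _)

/-- The decidable kernel of `ProvR`. -/
def Test (p : Set (L.Formula (Fin n))) (q : Set (L.Formula (Fin m))) (χr : Raw)
    (x : Raw × ℕ) : Prop :=
  PR p (dec2 x.2).1 ∧ PR q (dec2 x.2).2 ∧ PR p (sentR n m χr (dec2 x.2).1 (dec2 x.2).2 x.1)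

lemma prov_test (χr τ : Raw) : ProvR p q χr τ ↔ ∃ k, Test p q χr (τ, k) := by
  constructor
  · rintro ⟨l1, l2, h⟩
    refine ⟨Encodable.encode (l1, l2), ?_⟩
    have : dec2 (Encodable.encode (l1, l2)) = (l1, l2) := by
      rw [dec2, Encodable.encodek]; rfl
    simpa only [Test, this] using h
  · rintro ⟨k, h⟩
    exact ⟨_, _, h⟩

lemma test_computable (hdp : DecidableType p) (hdq : DecidableType q) (χr : Raw) :
    ComputablePred (Test p q χr) := by
  have h1 : Computable (fun x : Raw × ℕ => (dec2 x.2).1) :=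
    Computable.fst.comp (dec2_computable.comp Computable.snd)
  have h2 : Computable (fun x : Raw × ℕ => (dec2 x.2).2) :=
    Computable.snd.comp (dec2_computable.comp Computable.snd)
  refine cp_and (cp_comp (PR_computable hdp) h1) (cp_and (cp_comp (PR_computable hdq) h2)
    (cp_comp (PR_computable hdp) ?_))
  have hr : ∀ off, Computable (fun l => rs (n + m) off false l) := fun off =>
    ((rs_primrec off).comp (Primrec.const (n + m)) Primrec.id).to_comp
  exact Computable.list_append.comp (Computable.const _) (Computable.list_cons.comp
    (Computable.const _) (Computable.list_append.comp ((hr 0).comp h1) (Computable.list_cons.comp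
      (Computable.const _) (Computable.list_append.comp ((hr n).comp h2) (Computable.list_cons.comp
        (Computable.const _) (Computable.list_append.comp (Computable.const _) Computable.fst))))))

lemma tauR_computable (n m : ℕ) : Computable (tauR n m) := by
  have hK : Primrec (fun l : Raw => Encodable.encode l + 1) :=
    Primrec.succ.comp Primrec.encode
  refine Primrec.to_comp ?_
  exact Primrec.list_append.comp (repl_primrec.comp hK) ((rs_primrec 0).comp
    (Primrec.nat_add.comp (Primrec.const (n + m)) hK) (Primrec.list_cons.comp (Primrec.const _)
      (Primrec.list_append.comp Primrec.id (Primrec.const _))))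

lemma ER_computable (hp : IsTypeOf T p) (hq : IsTypeOf T q) {χ : L.Formula (Fin (n + m))}
    (hi : Isolates T p q χ) (hdp : DecidableType p) (hdq : DecidableType q) :
    ComputablePred (ER T p q χ) := by
  have hV := VR_computable hp hdp
  have ht := test_computable hdp hdq (raw (chiS χ))
  refine cp_of_exists
    (Q := fun x => VR L x.1 ∧
      Test p q (raw (chiS χ)) (nt 0 :: (tauR n m x.1 ++ [nt (n + m + 2)]), x.2))
    (R := fun x => ¬ VR L x.1 ∨ Test p q (raw (chiS χ)) (tauR n m x.1, x.2)) ?_ ?_ ?_ ?_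
  · refine cp_and (cp_comp hV Computable.fst) (cp_comp ht (Computable.pair ?_ Computable.snd))
    exact Computable.list_cons.comp (Computable.const _) (Computable.list_append.comp
      ((tauR_computable n m).comp Computable.fst) (Computable.const _))
  · exact cp_or (cp_comp hV.not Computable.fst) (cp_comp ht (Computable.pair
      ((tauR_computable n m).comp Computable.fst) Computable.snd))
  · intro l
    rw [ER_iff hp hq hi, prov_test]
    exact exists_and_left.symm
  · intro l
    rw [ER_iff_not hp hq, prov_test]
    by_cases h : VR L l <;> simp [h]

end Consistent

section Henkin

set_option linter.unusedSectionVars false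

variable [∀ k, Encodable (L.Functions k)] [∀ k, Encodable (L.Relations k)]
variable {T : L.Theory} {n m : ℕ} {p : Set (L.Formula (Fin n))} {q : Set (L.Formula (Fin m))}
variable {χ : L.Formula (Fin (n + m))}

/-- Raw negation. -/
def negR (l : Raw) : Raw := nt 0 :: (l ++ [nt 2])

/-- Raw conjunction. -/
def conjR (θ l : Raw) : Raw := negR (nt 0 :: (θ ++ negR l))

/-- Raw instance of a universal formula. -/
def witR (j : ℕ) (l : Raw) : Raw :=
  nt 1 :: nt 0 :: Sum.inl (1, [Sum.inl (Sum.inr 0)]) :: Sum.inl (1, [Sum.inl (Sum.inl j)]) :: l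

/-- Does the list start with a universal quantifier? -/
def hdAll (l : Raw) : Bool := decide (Encodable.encode l.head? = Encodable.encode (some (nt 1)))

lemma hdAll_primrec : Primrec hdAll :=
  (Primrec.eq.comp (Primrec.encode.comp Primrec.list_head?)
    (Primrec.const (Encodable.encode (some (nt 1))))).decide

lemma hdAll_iff (l : Raw) : hdAll l = true ↔ l.head? = some (nt 1) := by
  unfold hdAll
  rw [decide_eq_true_iff]
  exact Encodable.encode_inj

/-- The `j`-th candidate for the next condition. -/
def cand (θ l : Raw) : ℕ → Raw
  | 0 => conjR θ l
  | j + 1 => conjR θ (negR (bif hdAll l then witR j l.tail else l))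

/-- Instance of a universal formula, `∀ x (x = v_j → ψ)`. -/
def witF (j : ℕ) (ψ : L.BoundedFormula ℕ 1) : L.Formula ℕ :=
  BoundedFormula.all ((BoundedFormula.equal (Term.var (Sum.inr 0)) (Term.var (Sum.inl j))).imp ψ)

lemma raw_negF (φ : L.Formula ℕ) : raw φ.not = negR (raw φ) := raw_not φ

lemma raw_conj (θ φ : L.Formula ℕ) : raw (θ ⊓ φ) = conjR (raw θ) (raw φ) := by
  change raw (BoundedFormula.not (BoundedFormula.imp θ (BoundedFormula.not φ))) = _
  rw [raw_not, raw_imp, raw_not]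
  rfl

lemma raw_wit (j : ℕ) (ψ : L.BoundedFormula ℕ 1) : raw (witF j ψ) = witR j (raw ψ) := rfl

lemma realize_wit (j : ℕ) (ψ : L.BoundedFormula ℕ 1) {M : Type} [L.Structure M] (v : ℕ → M) :
    (witF j ψ).Realize v ↔ ψ.Realize v (fun _ => v j) := by
  have hs : ∀ x : M, (Fin.snoc (default : Fin 0 → M) x : Fin 1 → M) = fun _ => x := by
    intro x
    funext i
    obtain rfl : i = Fin.last 0 := Fin.ext (by have := i.2; rw [Fin.val_last]; omega)
    exact Fin.snoc_last (α := fun _ => M) x _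
  refine BoundedFormula.realize_all.trans ?_
  simp only [BoundedFormula.realize_imp, hs]
  constructor
  · intro h
    exact h (v j) rfl
  · intro h x hx
    have hx' : x = v j := hx
    rw [hx']
    exact h

lemma realize_allF (ψ : L.BoundedFormula ℕ 1) {M : Type} [L.Structure M] (v : ℕ → M) :
    Formula.Realize (ψ.all : L.Formula ℕ) v ↔ ∀ x : M, ψ.Realize v (fun _ => x) := by
  have hs : ∀ x : M, (Fin.snoc (default : Fin 0 → M) x : Fin 1 → M) = fun _ => x := by
    intro x
    funext i
    obtain rfl : i = Fin.last 0 := Fin.ext (by have := i.2; rw [Fin.val_last]; omega)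
    exact Fin.snoc_last (α := fun _ => M) x _
  refine BoundedFormula.realize_all.trans ?_
  simp only [hs]

/-- Typed candidates. -/
lemma cand_typed (Θ φ : L.Formula ℕ) (j : ℕ) : ∃ Θ' : L.Formula ℕ,
    raw Θ' = cand (raw Θ) (raw φ) (j + 1) ∧ ∀ (M : Type) [L.Structure M] (v : ℕ → M),
      Θ'.Realize v ↔ Θ.Realize v ∧ ¬ φ.Realize v ∧
        ∀ ψ : L.BoundedFormula ℕ 1, φ = ψ.all → ¬ ψ.Realize v (fun _ => v j) := by
  by_cases h : ∃ l, raw φ = nt 1 :: l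
  · obtain ⟨l, hl⟩ := h
    obtain ⟨ψ, h1, h2⟩ := peel_all φ l hl
    subst h2
    refine ⟨Θ ⊓ (witF j ψ).not, ?_, fun M _ v => ?_⟩
    · rw [raw_conj, raw_negF, raw_wit]
      have : hdAll (raw (BoundedFormula.all ψ)) = true := (hdAll_iff _).2 rfl
      simp only [cand, this, cond_true]
      rfl
    · rw [Formula.realize_inf, Formula.realize_not, realize_wit, realize_allF]
      refine and_congr Iff.rfl ⟨fun h => ⟨fun h2 => h (h2 _), fun ψ' h2 => ?_⟩, fun h => h.2 ψ rfl⟩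
      cases h2
      exact h
  · refine ⟨Θ ⊓ φ.not, ?_, fun M _ v => ?_⟩
    · rw [raw_conj, raw_negF]
      have : hdAll (raw φ) = false := by
        rw [Bool.eq_false_iff]
        intro h2
        rw [hdAll_iff] at h2
        rcases e : raw φ with - | ⟨t, l⟩
        · rw [e] at h2; simp at h2
        · rw [e] at h2
          simp at h2
          exact h ⟨l, by rw [e, h2]⟩
      simp only [cand, this, cond_false]
    · rw [Formula.realize_inf, Formula.realize_not]
      refine and_congr Iff.rfl ⟨fun h2 => ⟨h2, fun ψ h3 => ?_⟩, fun h => h.1⟩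
      exact absurd ⟨raw ψ, by rw [h3]; rfl⟩ h

lemma exists_cand (Θ φ : L.Formula ℕ) (hΘ : EF T p q χ Θ) :
    ∃ j, ER T p q χ (cand (raw Θ) (raw φ) j) := by
  by_cases h0 : EF T p q χ (Θ ⊓ φ)
  · refine ⟨0, ?_⟩
    rw [cand, ← raw_conj]
    exact ER_raw.2 h0
  · obtain ⟨M, hM, v, hJ, hχ, hv⟩ := hΘ
    have hφ : ¬ φ.Realize v := fun h => h0 ⟨M, hM, v, hJ, hχ, Formula.realize_inf.2 ⟨hv, h⟩⟩
    set B := n + m + Encodable.encode (raw Θ) + Encodable.encode (raw φ) with hB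
    have hx : ∃ x : M, ∀ ψ : L.BoundedFormula ℕ 1, φ = ψ.all → ¬ ψ.Realize v (fun _ => x) := by
      by_cases h : ∃ ψ : L.BoundedFormula ℕ 1, φ = ψ.all
      · obtain ⟨ψ, rfl⟩ := h
        rw [realize_allF] at hφ
        push Not at hφ
        obtain ⟨x, hx⟩ := hφ
        refine ⟨x, fun ψ' h => ?_⟩
        cases h
        exact hx
      · exact ⟨v 0, fun ψ h2 => absurd ⟨ψ, h2⟩ h⟩
    obtain ⟨x, hx⟩ := hx
    obtain ⟨Θ', h1, h2⟩ := cand_typed Θ φ B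
    refine ⟨B + 1, ?_⟩
    rw [← h1]
    refine ER_raw.2 ⟨M, hM, Function.update v B x, ?_⟩
    have hag : ∀ j < B, v j = Function.update v B x j := by
      intro j hj
      rw [Function.update_of_ne (by omega)]
    have e : (fun i : Fin (n + m) => Function.update v B x i) = fun i : Fin (n + m) => v i := by
      funext i
      exact (hag i (by have := i.2; omega)).symm
    rw [e]
    refine ⟨hJ, hχ, (h2 M _).2 ⟨?_, ?_, fun ψ hψ => ?_⟩⟩
    · exact (formula_agree Θ B (fun y hy => (encode_le_of_mem hy).trans_le (by omega)) _ _ hag _).1 hv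
    · exact fun h3 => hφ ((formula_agree φ B (fun y hy => (encode_le_of_mem hy).trans_le
        (by omega)) _ _ hag _).2 h3)
    · rw [Function.update_self]
      intro h3
      refine hx ψ hψ ((formula_agree ψ B (fun y hy => ?_) _ _ hag _).2 h3)
      have : y ∈ raw φ := by rw [hψ]; exact List.mem_cons_of_mem _ hy
      exact (encode_le_of_mem this).trans_le (by omega)

lemma exists_good (x : Raw × Raw) :
    ∃ j, ER T p q χ (cand x.1 x.2 j) ∨ ¬ (VR L x.2 ∧ ER T p q χ x.1) := by
  by_cases h : VR L x.2 ∧ ER T p q χ x.1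
  · obtain ⟨θ, l⟩ := x
    obtain ⟨⟨φ, rfl⟩, ⟨Θ, rfl, h2⟩⟩ := h
    obtain ⟨j, hj⟩ := exists_cand Θ φ h2
    exact ⟨j, Or.inl hj⟩
  · exact ⟨0, Or.inr h⟩

open Classical in
/-- The index of the chosen candidate. -/
noncomputable def idx (T : L.Theory) (p : Set (L.Formula (Fin n))) (q : Set (L.Formula (Fin m)))
    (χ : L.Formula (Fin (n + m))) (x : Raw × Raw) : ℕ :=
  Nat.find (exists_good (T := T) (p := p) (q := q) (χ := χ) x)

open Classical in
lemma idx_spec (x : Raw × Raw) : ER T p q χ (cand x.1 x.2 (idx T p q χ x)) ∨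
    ¬ (VR L x.2 ∧ ER T p q χ x.1) := by
  unfold idx
  exact Nat.find_spec (exists_good (T := T) (p := p) (q := q) (χ := χ) x)

open Classical in
/-- The next condition. -/
noncomputable def nxt (T : L.Theory) (p : Set (L.Formula (Fin n))) (q : Set (L.Formula (Fin m)))
    (χ : L.Formula (Fin (n + m))) (x : Raw × Raw) : Raw :=
  bif decide (VR L x.2 ∧ ER T p q χ x.1) then cand x.1 x.2 (idx T p q χ x) else x.1

lemma negR_computable : Computable negR :=
  Computable.list_cons.comp (Computable.const _)
    (Computable.list_append.comp Computable.id (Computable.const _))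

lemma conjR_computable : Computable (fun x : Raw × Raw => conjR x.1 x.2) :=
  negR_computable.comp (Computable.list_cons.comp (Computable.const _)
    (Computable.list_append.comp Computable.fst (negR_computable.comp Computable.snd)))

lemma witR_computable : Computable (fun x : ℕ × Raw => witR x.1 x.2) := by
  have h : Primrec (fun x : ℕ × Raw =>
      (Sum.inl (1, [Sum.inl (Sum.inl x.1)]) : Tok)) :=
    Primrec.sumInl.comp (Primrec.pair (Primrec.const 1) (Primrec.list_cons.comp
      (Primrec.sumInl.comp (Primrec.sumInl.comp Primrec.fst)) (Primrec.const [])))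
  exact Computable.list_cons.comp (Computable.const _) (Computable.list_cons.comp
    (Computable.const _) (Computable.list_cons.comp (Computable.const _)
      (Computable.list_cons.comp h.to_comp Computable.snd)))

lemma cand_computable : Computable (fun x : (Raw × Raw) × ℕ => cand x.1.1 x.1.2 x.2) := by
  have hl : Computable (fun y : ((Raw × Raw) × ℕ) × ℕ => y.1.1.2) :=
    Computable.snd.comp (Computable.fst.comp Computable.fst)
  have hθ : Computable (fun y : ((Raw × Raw) × ℕ) × ℕ => y.1.1.1) :=
    Computable.fst.comp (Computable.fst.comp Computable.fst)
  have h1 : Computable₂ (fun (x : (Raw × Raw) × ℕ) (j : ℕ) => conjR x.1.1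
      (negR (bif hdAll x.1.2 then witR j x.1.2.tail else x.1.2))) := by
    have h2 : Computable (fun y : ((Raw × Raw) × ℕ) × ℕ => y.1.1.2.tail) :=
      Primrec.list_tail.to_comp.comp hl
    have h3 : Computable (fun y : ((Raw × Raw) × ℕ) × ℕ => witR y.2 y.1.1.2.tail) :=
      Computable₂.comp (f := witR) (g := fun y : ((Raw × Raw) × ℕ) × ℕ => y.2)
        (h := fun y : ((Raw × Raw) × ℕ) × ℕ => y.1.1.2.tail) witR_computable Computable.snd h2
    have h4 : Computable (fun y : ((Raw × Raw) × ℕ) × ℕ => hdAll y.1.1.2) :=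
      hdAll_primrec.to_comp.comp hl
    have h5 : Computable (fun y : ((Raw × Raw) × ℕ) × ℕ =>
        bif hdAll y.1.1.2 then witR y.2 y.1.1.2.tail else y.1.1.2) := Computable.cond h4 h3 hl
    have h6 : Computable (fun y : ((Raw × Raw) × ℕ) × ℕ =>
        negR (bif hdAll y.1.1.2 then witR y.2 y.1.1.2.tail else y.1.1.2)) :=
      Computable.comp (f := negR) (g := fun y : ((Raw × Raw) × ℕ) × ℕ =>
        bif hdAll y.1.1.2 then witR y.2 y.1.1.2.tail else y.1.1.2) negR_computable h5
    have h7 : Computable₂ conjR := conjR_computable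
    exact Computable₂.comp (f := conjR) (g := fun y : ((Raw × Raw) × ℕ) × ℕ => y.1.1.1)
      (h := fun y : ((Raw × Raw) × ℕ) × ℕ =>
        negR (bif hdAll y.1.1.2 then witR y.2 y.1.1.2.tail else y.1.1.2)) h7 hθ h6
  refine (Computable.nat_casesOn (f := fun x : (Raw × Raw) × ℕ => x.2) Computable.snd
    (conjR_computable.comp Computable.fst) h1).of_eq ?_
  rintro ⟨⟨θ, l⟩, - | j⟩ <;> rfl

/-- The search predicate. -/
def Good (T : L.Theory) (p : Set (L.Formula (Fin n))) (q : Set (L.Formula (Fin m)))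
    (χ : L.Formula (Fin (n + m))) (x : Raw × Raw) (j : ℕ) : Prop :=
  ER T p q χ (cand x.1 x.2 j) ∨ ¬ (VR L x.2 ∧ ER T p q χ x.1)

lemma good_computable (hV : ComputablePred (VR L)) (hE : ComputablePred (ER T p q χ)) :
    ComputablePred (fun y : (Raw × Raw) × ℕ => Good T p q χ y.1 y.2) := by
  have hc : ComputablePred (fun x : Raw × Raw => VR L x.2 ∧ ER T p q χ x.1) :=
    cp_and (cp_comp hV Computable.snd) (cp_comp hE Computable.fst)
  have h0 : ComputablePred (fun y : (Raw × Raw) × ℕ => ER T p q χ (cand y.1.1 y.1.2 y.2)) :=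
    cp_comp (f := fun x : (Raw × Raw) × ℕ => cand x.1.1 x.1.2 x.2) hE cand_computable
  have h1 : ComputablePred (fun y : (Raw × Raw) × ℕ => ¬ (VR L y.1.2 ∧ ER T p q χ y.1.1)) :=
    cp_comp (f := fun y : (Raw × Raw) × ℕ => y.1) hc.not Computable.fst
  exact cp_or h0 h1

lemma idx_computable (hV : ComputablePred (VR L)) (hE : ComputablePred (ER T p q χ)) :
    Computable (idx T p q χ) := by
  classical
  have hex : ∀ x, ∃ j, Good T p q χ x j := exists_good
  have h := Computable.find (P := Good T p q χ) (good_computable hV hE) hex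
  refine h.of_eq fun x => ?_
  unfold idx
  refine Nat.find_congr' fun {j} => Iff.rfl

lemma nxt_computable (hV : ComputablePred (VR L)) (hE : ComputablePred (ER T p q χ)) :
    Computable (nxt T p q χ) := by
  classical
  have hc : ComputablePred (fun x : Raw × Raw => VR L x.2 ∧ ER T p q χ x.1) :=
    cp_and (cp_comp hV Computable.snd) (cp_comp hE Computable.fst)
  have h2 : Computable (fun x : Raw × Raw => cand x.1 x.2 (idx T p q χ x)) :=
    Computable.comp (f := fun x : (Raw × Raw) × ℕ => cand x.1.1 x.1.2 x.2)
      (g := fun x : Raw × Raw => (x, idx T p q χ x)) cand_computable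
      (Computable.pair Computable.id (idx_computable hV hE))
  obtain ⟨_, hd⟩ := hc
  refine (Computable.cond hd h2 Computable.fst).of_eq fun x => ?_
  unfold nxt
  congr

lemma nxt_spec (Θ φ : L.Formula ℕ) (hΘ : EF T p q χ Θ) : ∃ Θ' : L.Formula ℕ,
    nxt T p q χ (raw Θ, raw φ) = raw Θ' ∧ EF T p q χ Θ' ∧
    ∀ (M : Type) [L.Structure M] (v : ℕ → M), Θ'.Realize v → Θ.Realize v ∧
      (ER T p q χ (conjR (raw Θ) (raw φ)) → φ.Realize v) ∧
      (¬ ER T p q χ (conjR (raw Θ) (raw φ)) → ¬ φ.Realize v ∧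
        ∀ ψ : L.BoundedFormula ℕ 1, φ = ψ.all → ∃ j, ¬ ψ.Realize v (fun _ => v j)) := by
  classical
  have hc : VR L (raw φ) ∧ ER T p q χ (raw Θ) := ⟨⟨φ, rfl⟩, ER_raw.2 hΘ⟩
  have hn : nxt T p q χ (raw Θ, raw φ) = cand (raw Θ) (raw φ) (idx T p q χ (raw Θ, raw φ)) := by
    unfold nxt
    simp only [hc, and_self, decide_true, cond_true]
  have hs : ER T p q χ (cand (raw Θ) (raw φ) (idx T p q χ (raw Θ, raw φ))) := by
    rcases idx_spec (T := T) (p := p) (q := q) (χ := χ) (raw Θ, raw φ) with h | h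
    · exact h
    · exact absurd hc h
  have hmin : ER T p q χ (conjR (raw Θ) (raw φ)) → idx T p q χ (raw Θ, raw φ) = 0 := by
    intro h
    unfold idx
    rw [Nat.find_eq_zero]
    exact Or.inl h
  rw [hn]
  rcases hj : idx T p q χ (raw Θ, raw φ) with - | j
  · rw [hj] at hs
    refine ⟨Θ ⊓ φ, (raw_conj Θ φ).symm, ?_, fun M _ v h => ?_⟩
    · rw [cand, ← raw_conj] at hs
      exact ER_raw.1 hs
    · rw [Formula.realize_inf] at h
      exact ⟨h.1, fun _ => h.2, fun h2 => absurd hs h2⟩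
  · rw [hj] at hs hmin
    obtain ⟨Θ', h1, h2⟩ := cand_typed Θ φ j
    rw [← h1] at hs
    refine ⟨Θ', h1.symm, ER_raw.1 hs, fun M _ v h => ?_⟩
    obtain ⟨h3, h4, h5⟩ := (h2 M v).1 h
    exact ⟨h3, fun h => absurd (hmin h) (by omega), fun _ => ⟨h4, fun ψ hψ => ⟨j, h5 ψ hψ⟩⟩⟩

end Henkin

section Final

set_option linter.unusedSectionVars false

/-- Tarski–Vaught for the range of an assignment. -/
lemma range_elem {M : Type} [L.Structure M] (v : ℕ → M)
    (h : ∀ ψ : L.BoundedFormula ℕ 1, (∃ x : M, ψ.Realize v (fun _ => x)) →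
      ∃ j, ψ.Realize v (fun _ => v j)) :
    ∃ S : L.ElementarySubstructure M, ∀ x : M, x ∈ S ↔ ∃ j, v j = x := by
  have h' : ∀ θ : L.Formula (ℕ ⊕ Fin 1), (∃ x : M, θ.Realize (Sum.elim v (fun _ => x))) →
      ∃ j, θ.Realize (Sum.elim v (fun _ => v j)) := by
    intro θ
    have key : ∀ x : M, BoundedFormula.Realize (BoundedFormula.relabel id θ :
        L.BoundedFormula ℕ (1 + 0)) v (fun _ => x) ↔ θ.Realize (Sum.elim v (fun _ => x)) := by
      intro x
      rw [BoundedFormula.realize_relabel, Formula.Realize]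
      exact iff_of_eq (congrArg _ (Subsingleton.elim _ _))
    rintro ⟨x, hx⟩
    obtain ⟨j, hj⟩ := h _ ⟨x, (key x).2 hx⟩
    exact ⟨j, (key _).1 hj⟩
  let S : L.Substructure M := ⟨Set.range v, by
    intro k f x hx
    choose js hjs using hx
    obtain ⟨j, hj⟩ := h' (Term.equal (Term.var (Sum.inr 0))
      (Term.func f (fun i => Term.var (Sum.inl (js i))))) ⟨Structure.funMap f x, by
        rw [Formula.realize_equal]
        simp [Term.realize_func, hjs]⟩
    refine ⟨j, ?_⟩
    rw [Formula.realize_equal] at hj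
    simpa [Term.realize_func, hjs] using hj⟩
  refine ⟨S.toElementarySubstructure ?_, fun x => Iff.rfl⟩
  intro k φ x a ha
  have hx : ∀ i, ∃ j, v j = (x i : M) := fun i => (x i).2
  choose js hjs using hx
  have key : ∀ y : M, Formula.Realize (φ.toFormula.relabel (Sum.elim Empty.elim
      (Fin.snoc (fun i => Sum.inl (js i)) (Sum.inr 0) : Fin (k + 1) → ℕ ⊕ Fin 1)))
        (Sum.elim v (fun _ => y)) ↔ φ.Realize default (Fin.snoc ((↑) ∘ x) y : _ → M) := by
    intro y
    rw [Formula.realize_relabel, BoundedFormula.realize_toFormula]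
    refine iff_of_eq (congrArg₂ _ (Subsingleton.elim _ _) ?_)
    funext i
    refine Fin.lastCases ?_ (fun i => ?_) i
    · simp
    · simp [hjs]
  obtain ⟨j, hj⟩ := h' _ ⟨a, (key a).2 ha⟩
  exact ⟨⟨v j, j, rfl⟩, (key _).1 hj⟩

variable [∀ k, Encodable (L.Functions k)] [∀ k, Encodable (L.Relations k)]
variable {T : L.Theory} {n m : ℕ} {p : Set (L.Formula (Fin n))} {q : Set (L.Formula (Fin m))}
variable {χ : L.Formula (Fin (n + m))}

/-- Decoding of raw formulas. -/
def lS (s : ℕ) : Raw := (Encodable.decode (α := Raw) s).getD []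

lemma lS_computable : Computable lS :=
  Computable.option_getD Computable.decode (Computable.const _)

lemma lS_encode (l : Raw) : lS (Encodable.encode l) = l := by
  rw [lS, Encodable.encodek]; rfl

/-- The sequence of conditions. -/
noncomputable def thS (T : L.Theory) (p : Set (L.Formula (Fin n))) (q : Set (L.Formula (Fin m)))
    (χ : L.Formula (Fin (n + m))) (s : ℕ) : Raw :=
  Nat.rec (motive := fun _ => Raw) (negR [nt 2]) (fun y IH => nxt T p q χ (IH, lS y)) s

lemma thS_succ (s : ℕ) : thS T p q χ (s + 1) = nxt T p q χ (thS T p q χ s, lS s) := rfl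

lemma thS_computable (h : Computable (nxt T p q χ)) : Computable (thS T p q χ) := by
  have h1 : Computable₂ (fun (_ : ℕ) (y : ℕ × Raw) => nxt T p q χ (y.2, lS y.1)) :=
    Computable.comp (f := nxt T p q χ) (g := fun z : ℕ × (ℕ × Raw) => (z.2.2, lS z.2.1)) h
      (Computable.pair (Computable.snd.comp Computable.snd)
        (lS_computable.comp (Computable.fst.comp Computable.snd)))
  exact Computable.nat_rec (f := fun s : ℕ => s) (g := fun _ => negR [nt 2]) Computable.id
    (Computable.const _) h1

lemma nxt_trivial {θ l : Raw} (h : ¬ VR L l) : nxt T p q χ (θ, l) = θ := by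
  unfold nxt
  simp [h]

lemma exists_conditions (hi : Isolates T p q χ) : ∃ Θ : ℕ → L.Formula ℕ,
    ∀ s, raw (Θ s) = thS T p q χ s ∧ EF T p q χ (Θ s) := by
  have : ∀ s, ∃ Θ : L.Formula ℕ, raw Θ = thS T p q χ s ∧ EF T p q χ Θ := by
    intro s
    induction s with
    | zero =>
      refine ⟨(BoundedFormula.falsum : L.Formula ℕ).not, raw_negF _, ?_⟩
      obtain ⟨M, hM, a, hJ, hχ⟩ := hi.1
      obtain ⟨x⟩ : Nonempty M := inferInstance
      refine ⟨M, hM, fun j => if h : j < n + m then a ⟨j, h⟩ else x, ?_⟩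
      have e : (fun i : Fin (n + m) => if h : (i : ℕ) < n + m then a ⟨i, h⟩ else x) = a := by
        funext i
        rw [dif_pos i.2]
      rw [e]
      exact ⟨hJ, hχ, fun h => h⟩
    | succ s ih =>
      obtain ⟨Θ, h1, h2⟩ := ih
      by_cases hV : VR L (lS s)
      · obtain ⟨φ, hφ⟩ := hV
        obtain ⟨Θ', h3, h4, -⟩ := nxt_spec Θ φ h2
        exact ⟨Θ', by rw [thS_succ, ← h1, ← hφ, h3], h4⟩
      · exact ⟨Θ, by rw [thS_succ, nxt_trivial hV, h1], h2⟩
  choose Θ h using this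
  exact ⟨Θ, h⟩

lemma step_spec (Θ : ℕ → L.Formula ℕ) (hΘ : ∀ s, raw (Θ s) = thS T p q χ s ∧ EF T p q χ (Θ s))
    (s : ℕ) (φ : L.Formula ℕ) (hφ : raw φ = lS s) :
    ∀ (M : Type) [L.Structure M] (v : ℕ → M), (Θ (s + 1)).Realize v → (Θ s).Realize v ∧
      (ER T p q χ (conjR (thS T p q χ s) (lS s)) → φ.Realize v) ∧
      (¬ ER T p q χ (conjR (thS T p q χ s) (lS s)) → ¬ φ.Realize v ∧
        ∀ ψ : L.BoundedFormula ℕ 1, φ = ψ.all → ∃ j, ¬ ψ.Realize v (fun _ => v j)) := by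
  obtain ⟨Θ', h1, -, h3⟩ := nxt_spec (Θ s) φ (hΘ s).2
  have e : Θ (s + 1) = Θ' := raw_inj (by
    rw [(hΘ (s + 1)).1, thS_succ, ← h1, (hΘ s).1, hφ])
  rw [e, ← (hΘ s).1, ← hφ]
  exact h3

lemma step_mono (Θ : ℕ → L.Formula ℕ) (hΘ : ∀ s, raw (Θ s) = thS T p q χ s ∧ EF T p q χ (Θ s))
    {s t : ℕ} (hst : s ≤ t) {M : Type} [L.Structure M] {v : ℕ → M} (h : (Θ t).Realize v) :
    (Θ s).Realize v := by
  induction t, hst using Nat.le_induction with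
  | base => exact h
  | succ t _ ih =>
    apply ih
    by_cases hV : VR L (lS t)
    · obtain ⟨φ, hφ⟩ := hV
      exact (step_spec Θ hΘ t φ hφ M v h).1
    · have : Θ (t + 1) = Θ t := raw_inj (by
        rw [(hΘ (t + 1)).1, thS_succ, nxt_trivial hV, (hΘ t).1])
      rwa [this] at h

lemma exists_generic (hp : IsTypeOf T p) (hq : IsTypeOf T q)
    (Θ : ℕ → L.Formula ℕ) (hΘ : ∀ s, raw (Θ s) = thS T p q χ s ∧ EF T p q χ (Θ s)) :
    ∃ M : Mdl T, Countable M ∧ ∃ v : ℕ → M, Joint p q M (fun i : Fin (n + m) => v i) ∧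
      ∀ s, (Θ s).Realize v := by
  obtain ⟨M, hM, v, hv⟩ := compact T {φ : L.Formula ℕ | ∃ s, ∀ M : Mdl T, ∀ v : ℕ → M,
    Joint p q M (fun i : Fin (n + m) => v i) → (Θ s).Realize v → φ.Realize v} (by
      intro F hF
      have : ∃ s, ∀ φ ∈ F, ∀ M : Mdl T, ∀ v : ℕ → M,
          Joint p q M (fun i : Fin (n + m) => v i) → (Θ s).Realize v → φ.Realize v := by
        classical
        induction F using Finset.induction_on with
        | empty => exact ⟨0, fun φ h => absurd h (Finset.notMem_empty _)⟩
        | insert φ F _ ih =>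
          obtain ⟨s, hs⟩ := ih (fun x hx => hF (Finset.mem_insert_of_mem hx))
          obtain ⟨t, ht⟩ := hF (Finset.mem_insert_self φ F)
          refine ⟨max s t, fun θ hθ M v hJ hv => ?_⟩
          rcases Finset.mem_insert.1 hθ with rfl | hθ
          · exact ht M v hJ (step_mono Θ hΘ (le_max_right s t) hv)
          · exact hs θ hθ M v hJ (step_mono Θ hΘ (le_max_left s t) hv)
      obtain ⟨s, hs⟩ := this
      obtain ⟨M, -, v, hJ, -, hv⟩ := (hΘ s).2
      exact ⟨M, v, fun φ hφ => hs φ hφ M v hJ hv⟩)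
  refine ⟨M, hM, v, ⟨?_, ?_⟩, fun s => hv _ ⟨s, fun N w _ h => h⟩⟩
  · refine typeOf_eq_of_forall hp fun φ hφ => ?_
    have := hv (φ.relabel (fun i : Fin n => (i : ℕ))) ⟨0, fun N w hJ _ => by
      rw [Formula.realize_relabel]
      have h1 := hJ.1
      rw [← h1] at hφ
      exact hφ⟩
    rw [Formula.realize_relabel] at this
    exact this
  · refine typeOf_eq_of_forall hq fun φ hφ => ?_
    have := hv (φ.relabel (fun i : Fin m => n + (i : ℕ))) ⟨0, fun N w hJ _ => by
      rw [Formula.realize_relabel]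
      have h1 := hJ.2
      rw [← h1] at hφ
      exact hφ⟩
    rw [Formula.realize_relabel] at this
    exact this

lemma exists_decidable (hT : T.IsComplete) (hs : IsSmall T) (hp : IsTypeOf T p)
    (hq : IsTypeOf T q) (hdp : DecidableType p) (hdq : DecidableType q) :
    ∃ M : Mdl T, Countable M ∧ DecidableModel (L := L) M ∧ Realizes M p ∧ Realizes M q := by
  obtain ⟨χ, hχ⟩ := exists_isolated hT hs hp hq
  have hi : Isolates T p q χ := hχ
  have hV := VR_computable hp hdp
  have hE := ER_computable hp hq hi hdp hdq
  have hn := nxt_computable hV hE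
  obtain ⟨Θ, hΘ⟩ := exists_conditions hi
  obtain ⟨M, hM, v, hJ, hv⟩ := exists_generic hp hq Θ hΘ
  have hdec : ∀ φ : L.Formula ℕ, φ.Realize v ↔
      ER T p q χ (conjR (thS T p q χ (Encodable.encode (raw φ))) (raw φ)) := by
    intro φ
    have h := step_spec Θ hΘ _ φ (lS_encode (raw φ)).symm M v (hv _)
    rw [lS_encode] at h
    exact ⟨fun h1 => by_contra fun h2 => (h.2.2 h2).1 h1, h.2.1⟩
  have hwit : ∀ ψ : L.BoundedFormula ℕ 1, (∃ x : M, ψ.Realize v (fun _ => x)) →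
      ∃ j, ψ.Realize v (fun _ => v j) := by
    rintro ψ ⟨x, hx⟩
    have h := step_spec Θ hΘ _ (ψ.not.all : L.Formula ℕ)
      (lS_encode (raw (ψ.not.all : L.Formula ℕ))).symm M v (hv _)
    have h1 : ¬ Formula.Realize (ψ.not.all : L.Formula ℕ) v := by
      rw [realize_allF]
      intro h2
      have := h2 x
      rw [BoundedFormula.realize_not] at this
      exact this hx
    obtain ⟨j, hj⟩ := (h.2.2 (fun h2 => h1 (h.2.1 h2))).2 ψ.not rfl
    rw [BoundedFormula.realize_not, not_not] at hj
    exact ⟨j, hj⟩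
  obtain ⟨S, hS⟩ := range_elem v hwit
  let g : ℕ → S := fun j => ⟨v j, (hS _).2 ⟨j, rfl⟩⟩
  have hg : ∀ φ : L.Formula ℕ, φ.Realize g ↔ φ.Realize v := fun φ => elemSub_realize S φ g
  have hsurj : Function.Surjective g := by
    rintro ⟨x, hx⟩
    obtain ⟨j, rfl⟩ := (hS x).1 hx
    exact ⟨j, rfl⟩
  refine ⟨⟨S⟩, hsurj.countable, ⟨g, hsurj, ?_⟩, ⟨fun i : Fin n => g i, ?_⟩,
    ⟨fun i : Fin m => g (n + i), ?_⟩⟩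
  · have hth := thS_computable hn
    have h1 : ComputablePred (fun c : ℕ => VR L (lS c)) := cp_comp hV lS_computable
    have h2 : ComputablePred (fun c : ℕ => Encodable.encode (lS c) = c) := by
      have h5 : ComputablePred (fun x : ℕ × ℕ => x.1 = x.2) := Primrec.eq.computablePred
      exact cp_comp (f := fun c : ℕ => (Encodable.encode (lS c), c)) h5
        (Computable.pair (Computable.encode.comp lS_computable) Computable.id)
    have h3 : Computable (fun c : ℕ => conjR (thS T p q χ c) (lS c)) :=
      Computable₂.comp (f := conjR) (g := thS T p q χ) (h := lS) conjR_computable hth lS_computable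
    have h4 : ComputablePred (fun c : ℕ => ER T p q χ (conjR (thS T p q χ c) (lS c))) :=
      cp_comp (f := fun c : ℕ => conjR (thS T p q χ c) (lS c)) hE h3
    refine (cp_and h1 (cp_and h2 h4)).of_eq fun c => ?_
    constructor
    · rintro ⟨⟨φ, hφ⟩, h5, h6⟩
      refine ⟨φ, by rw [← encode_raw, hφ, h5], (hg φ).2 ((hdec φ).2 ?_)⟩
      rw [hφ, h5]
      exact h6
    · rintro ⟨φ, rfl, h5⟩
      rw [← encode_raw, lS_encode]
      exact ⟨⟨φ, rfl⟩, rfl, (hdec φ).1 ((hg φ).1 h5)⟩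
  · ext φ
    rw [← hJ.1]
    exact elemSub_realize S φ _
  · ext φ
    rw [← hJ.2]
    exact elemSub_realize S φ _

end Final

variable {L : FirstOrder.Language.{0, 0}}
  [∀ k, Encodable (L.Functions k)] [∀ k, Encodable (L.Relations k)]

/-- Any two types of a small theory are realized together in some
countable model; if moreover the theory is a decidable AL theory and both types are
decidable, the model can be chosen decidable. -/
theorem two_types_realized_in_one_model
    (T : L.Theory) (hcomp : T.IsComplete) (hsmall : IsSmall T)
    {n m : ℕ} (p : Set (L.Formula (Fin n))) (q : Set (L.Formula (Fin m)))
    (hp : IsTypeOf T p) (hq : IsTypeOf T q) :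
    (∃ M : Mdl T, Countable M ∧ Realizes M p ∧ Realizes M q) ∧
    (IsALTheory T → DecidableTheory T → DecidableType p → DecidableType q →
      ∃ M : Mdl T, Countable M ∧ DecidableModel (L := L) M ∧
        Realizes M p ∧ Realizes M q) := by
  refine ⟨?_, fun _ _ hdp hdq => exists_decidable hcomp hsmall hp hq hdp hdq⟩
  obtain ⟨M, hM, a, h1, h2⟩ := exists_joint hcomp hp hq
  exact ⟨M, hM, ⟨_, h1⟩, ⟨_, h2⟩⟩

end PaperAL
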